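/- arXiv:1011.4884 — 2 statements merged into one kernel-verified Lean document; each statement's English description precedes it below -/
import Mathlib

section
/- Let f : ℂⁿ → ℂ be a mixed polynomial. Then S(f) ⊆ K_∞(f), where K_∞(f) is the set of asymptotic critical values of f in the sense of Kurdyka–Orro–Simon. -/
open Complex Filter Finset

noncomputable section

abbrev MixedCoeff (n : ℕ) := ((Fin n → ℕ) × (Fin n → ℕ)) →₀ ℂ

namespace Mixed

variable {n : ℕ}

/-- Evaluation of a mixed polynomial given by its coefficient function `c`:
`f(z) = Σ c(ν,μ) zᵛ z̄ᵘ`. -/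
def eval (c : MixedCoeff n) (z : Fin n → ℂ) : ℂ :=
  c.sum fun p a => a * (∏ i, z i ^ p.1 i) * ∏ i, (starRingEnd ℂ) (z i) ^ p.2 i

/-- `∂f/∂z_i` evaluated at `(z, z̄)`. -/
def dz (c : MixedCoeff n) (i : Fin n) (z : Fin n → ℂ) : ℂ :=
  c.sum fun p a => a * (p.1 i) * (∏ j, z j ^ (p.1 j - if j = i then 1 else 0)) *
    ∏ j, (starRingEnd ℂ) (z j) ^ p.2 j

/-- `∂f/∂z̄_i` evaluated at `(z, z̄)`. -/
def dzbar (c : MixedCoeff n) (i : Fin n) (z : Fin n → ℂ) : ℂ :=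
  c.sum fun p a => a * (p.2 i) * (∏ j, z j ^ p.1 j) *
    ∏ j, (starRingEnd ℂ) (z j) ^ (p.2 j - if j = i then 1 else 0)

/-- The singular locus of `f` as a real map `ℝ²ⁿ → ℝ²`. -/
def Sing (c : MixedCoeff n) : Set (Fin n → ℂ) :=
  {z | ¬ Function.Surjective ⇑(fderiv ℝ (eval c) z)}

/-- The Milnor set `M(f)`. -/
def Milnor (c : MixedCoeff n) : Set (Fin n → ℂ) :=
  {z | ∃ (l : ℝ) (m : ℂ), m ≠ 0 ∧
    ∀ i, (l : ℂ) * z i = m * (starRingEnd ℂ) (dz c i z) + (starRingEnd ℂ) m * dzbar c i z}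

/-- The set `S(f)` of asymptotic ρ-nonregular values. -/
def Sset (c : MixedCoeff n) : Set ℂ :=
  {v | ∃ zk : ℕ → (Fin n → ℂ), (∀ k, zk k ∈ Milnor c) ∧
    Tendsto (fun k => ‖zk k‖) atTop atTop ∧
    Tendsto (fun k => eval c (zk k)) atTop (nhds v)}

/-- The point of `ℝⁿ` attached to the exponent pair `(ν,μ)`, namely `ν+μ`. -/
def suppPt (p : (Fin n → ℕ) × (Fin n → ℕ)) : Fin n → ℝ := fun i => ((p.1 i + p.2 i : ℕ) : ℝ)

/-- The support of `f`, as a subset of `ℝⁿ`. -/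
def suppPts (c : MixedCoeff n) : Set (Fin n → ℝ) := suppPt '' (c.support : Set _)

/-- The Newton polyhedron `Γ₀(f)`: convex hull of `{0} ∪ supp(f)`. -/
def Gamma0 (c : MixedCoeff n) : Set (Fin n → ℝ) := convexHull ℝ (insert 0 (suppPts c))

/-- `supp(f)‾`: the convex hull of `supp(f) \ {0}`. -/
def suppBar (c : MixedCoeff n) : Set (Fin n → ℝ) := convexHull ℝ (suppPts c \ {0})

/-- `F` is a face of the (compact convex) set `C`: either `C` itself or the set of
minimizers on `C` of a linear functional, and nonempty. -/
def IsFaceOf (C F : Set (Fin n → ℝ)) : Prop :=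
  F.Nonempty ∧ (F = C ∨ ∃ a : Fin n → ℝ,
    F = {x ∈ C | ∀ y ∈ C, ∑ i, a i * x i ≤ ∑ i, a i * y i})

/-- `Δ` is a face of the Newton boundary at infinity `Γ⁺(f)`: a face of `Γ₀(f)` not
containing the origin. -/
def IsGammaPlusFace (c : MixedCoeff n) (Δ : Set (Fin n → ℝ)) : Prop :=
  IsFaceOf (Gamma0 c) Δ ∧ (0 : Fin n → ℝ) ∉ Δ

/-- `Γ⁺(f)` as a subset of `ℝⁿ`: the union of the faces of `Γ₀(f)` not containing `0`. -/
def GammaPlusSet (c : MixedCoeff n) : Set (Fin n → ℝ) :=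
  {x | ∃ Δ, IsGammaPlusFace c Δ ∧ x ∈ Δ}

/-- The truncation `f_Δ` of `f` to a subset `Δ ⊆ ℝⁿ`. -/
def trunc (c : MixedCoeff n) (Δ : Set (Fin n → ℝ)) : MixedCoeff n :=
  @Finsupp.filter _ _ _ (fun p => suppPt p ∈ Δ) (Classical.decPred _) c

/-- Newton non-degeneracy: for every face `Δ` of `Γ⁺(f)`,
`Sing f_Δ ∩ f_Δ⁻¹(0) ∩ (ℂ*)ⁿ = ∅`. -/
def NewtonNonDeg (c : MixedCoeff n) : Prop :=
  ∀ Δ, IsGammaPlusFace c Δ → ∀ z : Fin n → ℂ, (∀ i, z i ≠ 0) →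
    eval (trunc c Δ) z = 0 → z ∉ Sing (trunc c Δ)

/-- Newton strong non-degeneracy: for every face `Δ` of `Γ⁺(f)`,
`Sing f_Δ ∩ (ℂ*)ⁿ = ∅`. -/
def NewtonStronglyNonDeg (c : MixedCoeff n) : Prop :=
  ∀ Δ, IsGammaPlusFace c Δ → ∀ z : Fin n → ℂ, (∀ i, z i ≠ 0) →
    z ∉ Sing (trunc c Δ)

/-- `Δ` is a bad face of `supp(f)‾`. -/
def IsBadFace (c : MixedCoeff n) (Δ : Set (Fin n → ℝ)) : Prop :=
  IsFaceOf (suppBar c) Δ ∧ (0 : Fin n → ℝ) ∈ affineSpan ℝ Δ ∧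
    ∃ a : Fin n → ℝ, (∃ i, a i < 0) ∧ (∃ j, 0 < a j) ∧
      {x ∈ suppBar c | ∑ i, a i * x i = 0} = Δ

/-- `f` depends effectively on all its variables. -/
def EffectiveAll (c : MixedCoeff n) : Prop :=
  ∀ i, ∃ p ∈ c.support, 0 < p.1 i + p.2 i

/-- The Euclidean norm on `ℂⁿ`. -/
def norm2 (v : Fin n → ℂ) : ℝ := Real.sqrt (∑ i, Complex.normSq (v i))

end Mixed

/-!
On the Milnor set one can normalise `|μ| = 1`, so that `a ∇g + b ∇h = λ z` with `f = g + i h` and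
`a² + b² = 1`. Hence `ν(z) ≤ |λ| ‖z‖`, and it suffices that `λ ‖z‖²` tends to `0` along sequences in
the Milnor set going to infinity on which `f` is bounded.

Instead of selecting a curve, pass to the hyperreal point `z` represented by such a sequence, at
which `N = ‖z‖²` is infinite and `g`, `h` are finite. Every `ℝ`-derivation `D` of the hyperreals
satisfies `(λ / 2) D N = a D g + b D h`. The transcendence degree of `(N, g, h)` over `ℝ`
distinguishes three cases.

* Degree `1`: take `D N = N`. Then `λ N / 2 = a D g + b D h`, and `D g`, `D h` are infinitesimal, as
  a bounded algebraic function of `N` cannot grow logarithmically.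
* Degree `2`: `(N, g, h)` lies on an irreducible surface, and `λ N / 2` is up to sign the normal
  speed, with respect to `log N`, of its plane sections `N = const`. If this speed were not
  infinitesimal at some finite point, a maximum of the excess speed on the section would be another
  such point, but algebraic over `ℝ(N)`; this contradicts the argument of the first case.
* Degree `3`: a derivation with `D N = 1` and `D g = D h = 0` gives `λ = 0`.
-/

namespace AsymptoticCriticalValue

section AlgebraicDependence

open MvPolynomial TensorProduct

theorem exists_derivation_algebraMap_eq {k S F : Type*} [CommRing k] [CommRing S] [Field F]
    [CharZero F] [Algebra k S] [Algebra k F] [Algebra S F] [IsScalarTower k S F]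
    [FaithfulSMul S F] [Algebra.IsAlgebraic S F] (d : Derivation k S F) :
    ∃ D : Derivation k F F, ∀ s, D (algebraMap S F s) = d s := by
  have : IsDomain S := (FaithfulSMul.algebraMap_injective S F).isDomain
  let := FractionRing.liftAlgebra S F
  have : IsScalarTower S (FractionRing S) F := FractionRing.isScalarTower_liftAlgebra S F
  have : Algebra.IsAlgebraic (FractionRing S) F :=
    (IsFractionRing.comap_isAlgebraic_iff (A := S) (K := FractionRing S) (C := F)).1 inferInstance
  have : CharZero (FractionRing S) :=
    (RingHom.charZero_iff (algebraMap (FractionRing S) F).injective).2 inferInstance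
  have : Algebra.FormallyEtale (FractionRing S) F := Algebra.FormallyEtale.of_isSeparable _ _
  have : Algebra.FormallyEtale S (FractionRing S) :=
    Algebra.FormallyEtale.of_isLocalization (nonZeroDivisors S)
  have : Algebra.FormallyEtale S F := Algebra.FormallyEtale.comp S (FractionRing S) F
  let e := KaehlerDifferential.tensorKaehlerEquivOfFormallyEtale k S F
  let φ : F ⊗[S] (Ω[S⁄k]) →ₗ[F] F := d.liftKaehlerDifferential.liftBaseChange F
  refine ⟨(φ ∘ₗ e.symm.toLinearMap).compDer (KaehlerDifferential.D k F), fun s => ?_⟩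
  have hs : e.symm (KaehlerDifferential.D k F (algebraMap S F s)) =
      1 ⊗ₜ KaehlerDifferential.D k S s :=
    KaehlerDifferential.tensorKaehlerEquivOfFormallyEtale_symm_D_algebraMap k S F s
  change φ (e.symm _) = d s
  simp [hs, φ]

variable {k F σ : Type*} [Field k] [Field F] [Algebra k F]

theorem exists_derivation_apply_eq_of_isTranscendenceBasis [CharZero F] {x : σ → F}
    (hx : IsTranscendenceBasis k x) (y : σ → F) :
    ∃ D : Derivation k F F, ∀ i, D (x i) = y i := by
  let : Algebra (MvPolynomial σ k) F := (aeval x).toAlgebra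
  have : IsScalarTower k (MvPolynomial σ k) F :=
    IsScalarTower.of_algebraMap_eq fun r => ((aeval x).commutes r).symm
  have : FaithfulSMul (MvPolynomial σ k) F := (faithfulSMul_iff_algebraMap_injective _ _).2 hx.1
  have := hx.isAlgebraic
  have : Algebra.IsAlgebraic (MvPolynomial σ k) F :=
    Algebra.IsAlgebraic.of_ringHom_of_comp_eq hx.1.aevalEquiv (RingHom.id F)
      hx.1.aevalEquiv.surjective Function.injective_id
      (RingHom.ext fun a => hx.1.algebraMap_aevalEquiv a)
  obtain ⟨D, hD⟩ := exists_derivation_algebraMap_eq (mkDerivation k y)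
  exact ⟨D, fun i => by rw [← mkDerivation_X k y i, ← hD, ← aeval_X (R := k) x i]; rfl⟩

theorem exists_derivation_apply_eq [CharZero F] {x : σ → F} (hx : AlgebraicIndependent k x)
    (y : σ → F) : ∃ D : Derivation k F F, ∀ i, D (x i) = y i := by
  obtain ⟨t, hxt, ht⟩ := exists_isTranscendenceBasis_superset
    ((algebraicIndependent_subtype_range hx.injective).2 hx)
  obtain ⟨D, hD⟩ := exists_derivation_apply_eq_of_isTranscendenceBasis ht
    fun s => Function.extend x y 0 s
  exact ⟨D, fun i => (hD ⟨x i, hxt ⟨i, rfl⟩⟩).trans (hx.injective.extend_apply y 0 i)⟩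

theorem derivation_aeval {R A : Type*} [CommSemiring R] [CommSemiring A] [Algebra R A] [Fintype σ]
    (D : Derivation R A A) (x : σ → A) (P : MvPolynomial σ R) :
    D (aeval x P) = ∑ i, aeval x (pderiv i P) * D (x i) := by
  classical
  induction P using MvPolynomial.induction_on with
  | C a => simp
  | add p q hp hq => simp only [map_add, hp, hq, add_mul, Finset.sum_add_distrib]
  | mul_X p i hp =>
    simp only [map_mul, aeval_X, Derivation.leibniz, hp, pderiv_X, smul_eq_mul, map_add, add_mul,
      Finset.sum_add_distrib, Pi.single_apply, apply_ite, map_zero, ite_mul,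
      mul_one, mul_zero, zero_mul, Finset.sum_ite_eq, Finset.mem_univ, if_true, Finset.mul_sum,
      mul_assoc]

theorem dvd_of_irreducible_of_polynomial_aeval_eq_zero {S : Type*} [CommRing S]
    [IsGCDMonoid S] [Algebra S F] [FaithfulSMul S F] {P E : Polynomial S} (hP : Irreducible P)
    {x : F} (hPx : Polynomial.aeval x P = 0) (hEx : Polynomial.aeval x E = 0) : P ∣ E := by
  have : IsDomain S := (FaithfulSMul.algebraMap_injective S F).isDomain
  let := FractionRing.liftAlgebra S F
  have : IsScalarTower S (FractionRing S) F := FractionRing.isScalarTower_liftAlgebra S F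
  have hdeg : P.natDegree ≠ 0 := fun h => by
    rw [Polynomial.eq_C_of_natDegree_eq_zero h, Polynomial.aeval_C,
      FaithfulSMul.algebraMap_eq_zero_iff] at hPx
    exact hP.ne_zero (by rw [Polynomial.eq_C_of_natDegree_eq_zero h, hPx, Polynomial.C_0])
  have hprim : P.IsPrimitive := hP.isPrimitive hdeg
  have hmin := minpoly.eq_of_irreducible
    ((hprim.irreducible_iff_irreducible_map_fraction_map (K := FractionRing S)).1 hP)
    ((Polynomial.aeval_map_algebraMap _ x P).trans hPx)
  refine hprim.dvd_of_fraction_map_dvd_fraction_map (K := FractionRing S) ?_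
  exact (Dvd.intro _ hmin).trans
    (minpoly.dvd _ x ((Polynomial.aeval_map_algebraMap _ x E).trans hEx))

theorem dvd_of_irreducible_of_aeval_eq_zero {P E : MvPolynomial σ k} (hP : Irreducible P)
    {p : σ → F} (hPp : aeval p P = 0) (hEp : aeval p E = 0) {i : σ}
    (hp : AlgebraicIndependent k fun j : {j // j ≠ i} => p j) : P ∣ E := by
  classical
  let : Algebra (MvPolynomial {j // j ≠ i} k) F := (aeval fun j : {j // j ≠ i} => p j).toAlgebra
  have : IsScalarTower k (MvPolynomial {j // j ≠ i} k) F :=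
    IsScalarTower.of_algebraMap_eq fun r => ((aeval _).commutes r).symm
  have : FaithfulSMul (MvPolynomial {j // j ≠ i} k) F :=
    (faithfulSMul_iff_algebraMap_injective _ _).2 hp
  let e : MvPolynomial σ k ≃ₐ[k] Polynomial (MvPolynomial {j // j ≠ i} k) :=
    (renameEquiv k (Equiv.optionSubtypeNe i).symm).trans (optionEquivLeft k {j // j ≠ i})
  have he : ((Polynomial.aeval (p i)).restrictScalars k).comp e.toAlgHom = aeval p := by
    refine algHom_ext fun j => ?_
    by_cases hj : j = i
    · subst hj
      simp [e, Equiv.optionSubtypeNe_symm_apply, optionEquivLeft_X_none]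
    · have hXj : e (X j) = Polynomial.C (X ⟨j, hj⟩) := by
        simp [e, Equiv.optionSubtypeNe_symm_apply, hj, optionEquivLeft_X_some]
      change Polynomial.aeval (p i) (e (X j)) = _
      rw [hXj, Polynomial.aeval_C, aeval_X]
      exact aeval_X _ (⟨j, hj⟩ : {j // j ≠ i})
  have hdvd := dvd_of_irreducible_of_polynomial_aeval_eq_zero ((MulEquiv.irreducible_iff e).2 hP)
    ((DFunLike.congr_fun he P).trans hPp) ((DFunLike.congr_fun he E).trans hEp)
  exact (map_dvd_iff e).1 hdvd

theorem algebraicIndependent_subtype_ne_of_comp {R A τ : Type*} [CommRing R] [CommRing A]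
    [Algebra R A] {p : σ → A} {f : τ → σ} {i : σ} (hf : ∀ j ≠ i, ∃ t, f t = j)
    (hp : AlgebraicIndependent R (p ∘ f)) : AlgebraicIndependent R fun j : {j // j ≠ i} => p j := by
  choose g hg using fun j : {j // j ≠ i} => hf j j.2
  have hg_inj : Function.Injective g := fun j j' h => Subtype.ext (by rw [← hg j, h, hg j'])
  simpa only [Function.comp_def, hg] using hp.comp g hg_inj

theorem totalDegree_pderiv_lt {R : Type*} [CommSemiring R] {i : σ} {P : MvPolynomial σ R}
    (h : pderiv i P ≠ 0) : (pderiv i P).totalDegree < P.totalDegree := by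
  have hdeg (m : σ →₀ ℕ) (hm : m ∈ (pderiv i P).support) :
      (m.sum fun _ e => e) + 1 ≤ P.totalDegree := by
    have hmi : m + Finsupp.single i 1 ∈ P.support := by
      rw [mem_support_iff, coeff_pderiv] at hm
      exact mem_support_iff.2 (left_ne_zero_of_mul hm)
    have := le_totalDegree hmi
    rwa [Finsupp.sum_add_index' (fun _ => rfl) fun _ _ _ => rfl, Finsupp.sum_single_index rfl]
      at this
  obtain ⟨m, hm⟩ := support_nonempty.2 h
  rw [totalDegree, Finset.sup_lt_iff (Nat.zero_lt_of_lt (hdeg m hm))]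
  exact hdeg

theorem exists_pderiv_ne_zero {R : Type*} [CommSemiring R] [NoZeroDivisors R] [CharZero R]
    {P : MvPolynomial σ R} (h : P.totalDegree ≠ 0) :
    ∃ i, pderiv i P ≠ 0 := by
  contrapose! h
  rw [totalDegree_eq_zero_iff]
  intro m hm i
  by_contra hi
  have hmi : m - Finsupp.single i 1 + Finsupp.single i 1 = m :=
    tsub_add_cancel_of_le (Finsupp.single_le_iff.2 (Nat.one_le_iff_ne_zero.2 hi))
  have hcoeff := coeff_pderiv P (i := i) (m - Finsupp.single i 1)
  rw [h, coeff_zero, hmi, zero_eq_mul] at hcoeff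
  exact hcoeff.elim (mem_support_iff.1 hm) (Nat.cast_add_one_ne_zero _)

theorem exists_irreducible_aeval_eq_zero [CharZero k] {p : σ → F}
    (hp : ¬ AlgebraicIndependent k p) :
    ∃ P : MvPolynomial σ k, Irreducible P ∧ aeval p P = 0 ∧ ∃ i, aeval p (pderiv i P) ≠ 0 := by
  let S := {P : MvPolynomial σ k | P ≠ 0 ∧ aeval p P = 0}
  have hS : S.Nonempty := by
    simpa [S, Set.Nonempty, algebraicIndependent_iff, and_comm] using hp
  obtain ⟨P, ⟨hP0, hPp⟩, hPmin⟩ : ∃ P ∈ S, ∀ Q ∈ S, P.totalDegree ≤ Q.totalDegree :=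
    ⟨totalDegree.argminOn S hS, totalDegree.argminOn_mem S hS, fun Q hQ =>
      totalDegree.argminOn_le S hQ⟩
  have hPdeg : P.totalDegree ≠ 0 := fun h => by
    rw [totalDegree_eq_zero_iff_eq_C.1 h, aeval_C, map_eq_zero] at hPp
    exact hP0 (by rw [totalDegree_eq_zero_iff_eq_C.1 h, hPp, C_0])
  obtain ⟨i, hi⟩ := exists_pderiv_ne_zero hPdeg
  exact ⟨P, irreducible_of_forall_totalDegree_le (fun Q hQ hQp => hPmin Q ⟨hQ, hQp⟩) hP0 hPp, hPp,
    i, fun h => (totalDegree_pderiv_lt hi).not_ge (hPmin _ ⟨hi, h⟩)⟩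

end AlgebraicDependence

section ImplicitCurve

open Topology

theorem frequently_eq_zero_above_line {f : ℝ × ℝ → ℝ} {f' : ℝ × ℝ →L[ℝ] ℝ} {p : ℝ × ℝ} {c : ℝ}
    (hf : Continuous f) (hf' : HasFDerivAt f f' p) (hp : f p = 0)
    (hc : f' (0, 1) * f' (1, c) < 0) :
    ∃ᶠ q in 𝓝 p, p.1 < q.1 ∧ p.2 + c * (q.1 - p.1) ≤ q.2 ∧ f q = 0 := by
  -- The slope `α ≥ c` is chosen so that `A * f' (1, α) = 1`, hence `f` changes sign between the
  -- rays of slopes `c` and `α` through `p`.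
  set A := f' (0, 1)
  set α := c + (1 - A * f' (1, c)) / A ^ 2
  have hA : A ≠ 0 := left_ne_zero_of_mul hc.ne
  have hcα : c ≤ α := le_add_of_nonneg_right (div_nonneg (by linarith) (sq_nonneg A))
  have hα : A * f' (1, α) = 1 := by
    have h : ((1, α) : ℝ × ℝ) = (1, c) + ((1 - A * f' (1, c)) / A ^ 2) • (0, 1) := by
      simp [α]
    rw [h, map_add, map_smul, smul_eq_mul]
    field_simp
    ring
  have hslope (β : ℝ) : Tendsto (fun t : ℝ => t⁻¹ * (A * f (p + t • (1, β)))) (𝓝[>] 0)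
      (𝓝 (A * f' (1, β))) := by
    have h := ((hf'.hasLineDerivAt (1, β)).const_mul A).tendsto_slope_zero_right
    simpa [hp] using h
  rw [frequently_iff]
  intro U hU
  have hnear : ∀ᶠ t in 𝓝[>] (0 : ℝ), ∀ β ∈ Set.Icc c α, p + t • (1, β) ∈ U := by
    refine eventually_nhdsWithin_of_eventually_nhds
      (isCompact_Icc.eventually_forall_of_forall_eventually fun β _ => ?_)
    have : ContinuousAt (fun z : ℝ × ℝ => p + z.1 • ((1, z.2) : ℝ × ℝ)) (0, β) := by fun_prop
    exact this (by simpa using hU)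
  obtain ⟨t, htc, htα, htU, ht⟩ := (((hslope c).eventually_lt_const hc).and
    (((hslope α).eventually_const_lt (hα ▸ one_pos)).and (hnear.and self_mem_nhdsWithin))).exists
  have ht : 0 < t := ht
  have hcont : ContinuousOn (fun β : ℝ => t⁻¹ * (A * f (p + t • (1, β)))) (Set.Icc c α) := by
    fun_prop
  obtain ⟨β, hβ, hfβ⟩ := intermediate_value_Icc hcα hcont ⟨htc.le, htα.le⟩
  refine ⟨p + t • (1, β), htU β hβ, by simpa using ht, ?_, by simpa [ht.ne', hA] using hfβ⟩
  simpa [mul_comm t] using mul_le_mul_of_nonneg_right hβ.1 ht.le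

theorem exists_eq_zero_of_slope {f : ℝ × ℝ → ℝ} {f' : ℝ × ℝ → ℝ × ℝ →L[ℝ] ℝ} {p₀ : ℝ × ℝ} {c B : ℝ}
    (hf : ∀ p, HasFDerivAt f (f' p) p) (hf' : Continuous f') (hc : 0 < c)
    (hne : ∀ p, p₀.1 ≤ p.1 → f p = 0 → f' p (0, 1) * f' p (1, c) ≠ 0)
    (hp₀ : f p₀ = 0) (hslope : f' p₀ (0, 1) * f' p₀ (1, c) < 0) (hB : p₀.2 ≤ B) :
    ∃ s, p₀.1 ≤ s ∧ f (s, B) = 0 := by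
  have hfc : Continuous f := continuous_iff_continuousAt.2 fun p => (hf p).continuousAt
  have hvc (v : ℝ × ℝ) : Continuous fun p => f' p v := hf'.clm_apply continuous_const
  let K : Set (ℝ × ℝ) := Set.Icc p₀.1 (p₀.1 + (B - p₀.2) / c) ×ˢ Set.Icc p₀.2 B
  let Z : Set (ℝ × ℝ) := K ∩ {p | f p = 0 ∧ f' p (0, 1) * f' p (1, c) ≤ 0 ∧
    p₀.2 + c * (p.1 - p₀.1) ≤ p.2}
  have hZ : IsCompact Z := (isCompact_Icc.prod isCompact_Icc).inter_right
    ((isClosed_eq hfc continuous_const).inter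
      ((isClosed_le ((hvc _).mul (hvc _)) continuous_const).inter
        (isClosed_le (by fun_prop) continuous_snd)))
  have hp₀Z : p₀ ∈ Z := by
    have : 0 ≤ (B - p₀.2) / c := div_nonneg (sub_nonneg.2 hB) hc.le
    exact ⟨⟨⟨le_rfl, by linarith⟩, ⟨le_rfl, hB⟩⟩, hp₀, hslope.le, by simp⟩
  obtain ⟨p, ⟨⟨⟨hs, -⟩, -, hpB⟩, hfp, hp, hcone⟩, hmax⟩ :=
    hZ.exists_isMaxOn ⟨p₀, hp₀Z⟩ continuous_fst.continuousOn
  rcases hpB.eq_or_lt with rfl | hpB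
  · exact ⟨p.1, hs, hfp⟩
  have hneg : f' p (0, 1) * f' p (1, c) < 0 := hp.lt_of_ne (hne p hs hfp)
  have hnear : ∀ᶠ q in 𝓝 p, f' q (0, 1) * f' q (1, c) < 0 ∧ q.2 < B :=
    (((hvc _).mul (hvc _)).continuousAt.eventually_lt_const hneg).and
      (continuousAt_snd.eventually_lt_const hpB)
  obtain ⟨q, ⟨hpq, hline, hfq⟩, hq, hqB⟩ :=
    ((frequently_eq_zero_above_line hfc (hf p) hfp hneg).and_eventually hnear).exists
  have hcone' : p₀.2 + c * (q.1 - p₀.1) ≤ q.2 := by linarith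
  have hstep : 0 ≤ c * (q.1 - p₀.1) := mul_nonneg hc.le (by linarith)
  have hwidth : q.1 - p₀.1 ≤ (B - p₀.2) / c := by
    rw [le_div_iff₀ hc]
    linarith
  have hqZ : q ∈ Z :=
    ⟨⟨⟨by linarith, by linarith⟩, ⟨by linarith, hqB.le⟩⟩, hfq, hq.le, hcone'⟩
  exact absurd (hmax hqZ) hpq.not_ge

end ImplicitCurve

section Hyperreal

open MvPolynomial
open Hyperreal (ofSeq ofSeq_surjective tendsto_ofSeq)

/-- The hyperreals as an extension of the field of real constants. -/
instance : Algebra ℝ ℝ* := Hyperreal.coeRingHom.toAlgebra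

theorem algebraMap_hyperreal (c : ℝ) : algebraMap ℝ ℝ* c = c := rfl

theorem ofSeq_eq_zero {u : ℕ → ℝ} : ofSeq u = 0 ↔ ∀ᶠ k in hyperfilter ℕ, u k = 0 :=
  Germ.coe_eq

variable {σ : Type*}

theorem exists_ofSeq_eq (p : σ → ℝ*) : ∃ ρ : ℕ → σ → ℝ, p = fun i => ofSeq fun k => ρ k i := by
  choose ρ hρ using fun i => ofSeq_surjective (p i)
  exact ⟨fun k i => ρ i k, funext fun i => (hρ i).symm⟩

theorem aeval_ofSeq (ρ : ℕ → σ → ℝ) (P : MvPolynomial σ ℝ) :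
    aeval (fun i => ofSeq fun k => ρ k i) P = ofSeq fun k => eval (ρ k) P := by
  induction P using MvPolynomial.induction_on with
  | C a => simp only [aeval_C, eval_C]; rfl
  | add P Q hP hQ => simp only [map_add, hP, hQ]; rfl
  | mul_X P i hP => simp only [map_mul, hP, aeval_X, eval_X]; rfl

theorem aeval_ofSeq_pair (ρ ξ : ℕ → ℝ) (P : MvPolynomial (Fin 2) ℝ) :
    aeval ![ofSeq ρ, ofSeq ξ] P = ofSeq fun k => eval ![ρ k, ξ k] P := by
  rw [← aeval_ofSeq (fun k => ![ρ k, ξ k])]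
  congr 2
  exact funext (Fin.forall_fin_two.2 ⟨rfl, rfl⟩)

theorem polynomial_aeval_ofSeq (ρ : ℕ → ℝ) (P : Polynomial ℝ) :
    Polynomial.aeval (ofSeq ρ) P = ofSeq fun k => P.eval (ρ k) := by
  induction P using Polynomial.induction_on' with
  | add P Q hP hQ => simp only [map_add, hP, hQ, Polynomial.eval_add]; rfl
  | monomial n a => simp only [Polynomial.aeval_monomial, Polynomial.eval_monomial]; rfl

theorem transcendental_of_tendsto_atTop {r : ℝ*} (hr : r.Tendsto atTop) : Transcendental ℝ r := by
  obtain ⟨ρ, rfl⟩ := ofSeq_surjective r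
  rintro ⟨P, hP, hPr⟩
  rw [polynomial_aeval_ofSeq, ofSeq_eq_zero] at hPr
  obtain ⟨k, hk, hk'⟩ := (hPr.and ((tendsto_ofSeq.1 hr).eventually
    (Polynomial.eventually_atTop_not_isRoot P hP))).exists
  exact hk' hk

theorem eventually_eval_ne_zero_of_not_dvd {P E : MvPolynomial (Fin 2) ℝ} (hP : Irreducible P)
    (hE : ¬ P ∣ E) :
    ∀ᶠ r in atTop, ∀ x, eval ![r, x] P = 0 → eval ![r, x] E ≠ 0 := by
  by_contra h
  have h : ∃ᶠ r in atTop, ∃ x, eval ![r, x] P = 0 ∧ eval ![r, x] E = 0 := by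
    simpa [Filter.Frequently] using h
  obtain ⟨ρ, hρ, hρPE⟩ := exists_seq_forall_of_frequently h
  choose ξ hP0 hE0 using hρPE
  have hzero {Q : MvPolynomial (Fin 2) ℝ} (hQ : ∀ k, eval ![ρ k, ξ k] Q = 0) :
      aeval ![ofSeq ρ, ofSeq ξ] Q = 0 := by
    rw [aeval_ofSeq_pair, ofSeq_eq_zero]
    exact Eventually.of_forall hQ
  have hr : (ofSeq ρ).Tendsto atTop := tendsto_ofSeq.2 (hρ.mono_left Nat.hyperfilter_le_atTop)
  have hr_indep : AlgebraicIndependent ℝ fun _ : Unit => ofSeq ρ :=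
    algebraicIndependent_unique_type_iff.2 (transcendental_of_tendsto_atTop hr)
  have hne : ∀ j : Fin 2, j ≠ 1 → ∃ _ : Unit, 0 = j := by decide
  have hindep := algebraicIndependent_subtype_ne_of_comp (p := ![ofSeq ρ, ofSeq ξ]) hne hr_indep
  exact hE (dvd_of_irreducible_of_aeval_eq_zero hP (hzero hP0) (hzero hE0) hindep)

end Hyperreal

section AlgebraicFunctions

open MvPolynomial
open Hyperreal (ofSeq_surjective ofSeq_lt_ofSeq ofSeq_le_ofSeq)

theorem hasStrictFDerivAt_eval {𝕜 σ : Type*} [NontriviallyNormedField 𝕜] [Fintype σ]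
    (P : MvPolynomial σ 𝕜) (x : σ → 𝕜) :
    HasStrictFDerivAt (fun x : σ → 𝕜 => eval x P)
      (∑ i, eval x (pderiv i P) • (ContinuousLinearMap.proj i : (σ → 𝕜) →L[𝕜] 𝕜)) x := by
  classical
  induction P using MvPolynomial.induction_on with
  | C a =>
    refine ((hasStrictFDerivAt_const (𝕜 := 𝕜) a x).congr_fderiv ?_).congr_of_eventuallyEq
      (Eventually.of_forall fun y => by simp)
    ext u
    simp
  | add P Q hP hQ =>
    refine ((hP.add hQ).congr_fderiv ?_).congr_of_eventuallyEq
      (Eventually.of_forall fun y => by simp)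
    ext u
    simp [add_mul, Finset.sum_add_distrib]
  | mul_X P i hP =>
    have h := hP.mul ((ContinuousLinearMap.proj (R := 𝕜) (φ := fun _ : σ => 𝕜) i).hasStrictFDerivAt
      (x := x))
    refine (h.congr_fderiv ?_).congr_of_eventuallyEq (Eventually.of_forall fun y => by simp)
    ext u
    simp [pderiv_X, Pi.single_apply, apply_ite, Finset.mul_sum, add_mul, mul_assoc,
      Finset.sum_add_distrib, ite_mul]

theorem hasFDerivAt_eval_exp (P : MvPolynomial (Fin 2) ℝ) (p : ℝ × ℝ) :
    HasFDerivAt (fun p : ℝ × ℝ => eval ![Real.exp p.1, p.2] P)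
      (eval ![Real.exp p.1, p.2] (X 0 * pderiv 0 P) • ContinuousLinearMap.fst ℝ ℝ ℝ +
        eval ![Real.exp p.1, p.2] (pderiv 1 P) • ContinuousLinearMap.snd ℝ ℝ ℝ) p := by
  have hcurve : HasFDerivAt (fun p : ℝ × ℝ => ![Real.exp p.1, p.2])
      (ContinuousLinearMap.pi ![Real.exp p.1 • ContinuousLinearMap.fst ℝ ℝ ℝ,
        ContinuousLinearMap.snd ℝ ℝ ℝ]) p :=
    hasFDerivAt_pi'.2 (Fin.forall_fin_two.2 ⟨hasFDerivAt_fst.exp, hasFDerivAt_snd⟩)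
  refine ((hasStrictFDerivAt_eval P _).hasFDerivAt.comp p hcurve).congr_fderiv ?_
  ext <;> simp [mul_comm]

theorem exists_eval_eq_zero_of_slope {P : MvPolynomial (Fin 2) ℝ} {r₀ x₀ c B : ℝ} (hr₀ : 0 < r₀)
    (hc : 0 < c) (hne : ∀ r, r₀ ≤ r → ∀ x, eval ![r, x] P = 0 →
      eval ![r, x] (pderiv 1 P * (X 0 * pderiv 0 P + C c * pderiv 1 P)) ≠ 0)
    (hP : eval ![r₀, x₀] P = 0)
    (hslope : eval ![r₀, x₀] (pderiv 1 P * (X 0 * pderiv 0 P + C c * pderiv 1 P)) < 0)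
    (hB : x₀ ≤ B) : ∃ r, r₀ ≤ r ∧ eval ![r, B] P = 0 := by
  have hcurve : Continuous fun p : ℝ × ℝ => ![Real.exp p.1, p.2] :=
    continuous_pi (Fin.forall_fin_two.2
      ⟨Real.continuous_exp.comp continuous_fst, continuous_snd⟩)
  have hcont (Q : MvPolynomial (Fin 2) ℝ) :
      Continuous fun p : ℝ × ℝ => eval ![Real.exp p.1, p.2] Q :=
    (MvPolynomial.continuous_eval Q).comp hcurve
  obtain ⟨s, hs, hPs⟩ := exists_eq_zero_of_slope (p₀ := (Real.log r₀, x₀))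
    (hasFDerivAt_eval_exp P)
    (((hcont _).smul continuous_const).add ((hcont _).smul continuous_const)) hc
    (fun p hp hPp => by
      simpa [mul_comm c] using hne _ ((Real.log_le_iff_le_exp hr₀).1 hp) _ hPp)
    (by simpa [Real.exp_log hr₀] using hP)
    (by simpa [Real.exp_log hr₀, mul_comm c] using hslope) hB
  exact ⟨_, (Real.log_le_iff_le_exp hr₀).1 hs, hPs⟩

theorem aeval_slope_nonneg {P : MvPolynomial (Fin 2) ℝ} (hP : Irreducible P) {r x : ℝ*}
    (hr : r.Tendsto atTop) {M : ℝ} (hx : x ≤ M) (hPp : aeval ![r, x] P = 0) {c : ℝ} (hc : 0 < c) :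
    0 ≤ aeval ![r, x] (pderiv 1 P * (X 0 * pderiv 0 P + C c * pderiv 1 P)) := by
  -- Otherwise a real branch of `P = 0` near `(r, x)` grows at least like `c * log r`, hence crosses
  -- the line `X 1 = M + 1`, on which `P` has no zeros for large values of `X 0`.
  set S := pderiv 1 P * (X 0 * pderiv 0 P + C c * pderiv 1 P)
  by_contra! hS
  have hxM : x < (M + 1 : ℝ) := hx.trans_lt (Hyperreal.coe_lt_coe.2 (lt_add_one M))
  have hdvd : ¬ P ∣ S * (X 1 - C (M + 1)) := fun h => by
    have h0 : aeval ![r, x] (S * (X 1 - C (M + 1))) = 0 :=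
      zero_dvd_iff.1 (hPp ▸ map_dvd (aeval ![r, x]) h)
    rw [map_mul, map_sub, aeval_X, aeval_C, algebraMap_hyperreal] at h0
    exact mul_ne_zero hS.ne (sub_neg.2 hxM).ne h0
  obtain ⟨R, hR⟩ := eventually_atTop.1 (eventually_eval_ne_zero_of_not_dvd hP hdvd)
  have hrR : (max R 1 : ℝ) < r := Hyperreal.lt_of_tendsto_atTop _ hr
  obtain ⟨ρ, rfl⟩ := ofSeq_surjective r
  obtain ⟨ξ, rfl⟩ := ofSeq_surjective x
  rw [aeval_ofSeq_pair] at hPp hS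
  obtain ⟨k, hPk, hSk, hxk, hrk⟩ := ((ofSeq_eq_zero.1 hPp).and ((ofSeq_lt_ofSeq.1 hS).and
    ((ofSeq_le_ofSeq.1 hx).and (ofSeq_lt_ofSeq.1 hrR)))).exists
  obtain ⟨hRk, hk⟩ := max_lt_iff.1 hrk
  have hne (r : ℝ) (hr : ρ k ≤ r) (x : ℝ) (hPx : eval ![r, x] P = 0) := hR r (hRk.le.trans hr) x hPx
  obtain ⟨r, hr, hPr⟩ := exists_eval_eq_zero_of_slope (B := M + 1) (one_pos.trans hk) hc
    (fun r hr x hPx => left_ne_zero_of_mul (map_mul (eval ![r, x]) _ _ ▸ hne r hr x hPx)) hPk hSk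
    (hxk.trans (lt_add_one M).le)
  exact hne r hr _ hPr (by simp)

theorem derivation_apply_lt_of_le {r x : ℝ*} (hr : r.Tendsto atTop)
    (hrx : ¬ AlgebraicIndependent ℝ ![r, x]) {M : ℝ} (hx : x ≤ M) {D : Derivation ℝ ℝ* ℝ*}
    (hD : D r = r) {δ : ℝ} (hδ : 0 < δ) : D x < δ := by
  obtain ⟨c, hc, hcδ⟩ := exists_between hδ
  refine lt_of_le_of_lt ?_ (Hyperreal.coe_lt_coe.2 hcδ)
  have hr0 : (0 : ℝ*) < r := Hyperreal.lt_of_tendsto_atTop 0 hr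
  obtain ⟨P, hP, hPp, hPd⟩ := exists_irreducible_aeval_eq_zero hrx
  have hchain : aeval ![r, x] (pderiv 0 P) * r + aeval ![r, x] (pderiv 1 P) * D x = 0 := by
    simpa [hPp, Fin.sum_univ_two, hD] using (derivation_aeval D ![r, x] P).symm
  have hPx : aeval ![r, x] (pderiv 1 P) ≠ 0 := fun h => by
    rw [h, zero_mul, add_zero, mul_eq_zero, or_iff_left hr0.ne'] at hchain
    exact absurd hPd (by simp [Fin.exists_fin_two, h, hchain])
  have hslope : 0 ≤ aeval ![r, x] (pderiv 1 P) ^ 2 * (c - D x) := by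
    convert aeval_slope_nonneg hP hr hx hPp hc using 1
    simp only [map_mul, map_add, aeval_X, aeval_C, algebraMap_hyperreal, Matrix.cons_val_zero]
    linear_combination -aeval ![r, x] (pderiv 1 P) * hchain
  exact sub_nonneg.1 (nonneg_of_mul_nonneg_right hslope (by positivity))

theorem algebraicIndependent_pair_neg {R A : Type*} [CommRing R] [CommRing A]
    [Algebra R A] {r x : A} (h : AlgebraicIndependent R ![r, -x]) :
    AlgebraicIndependent R ![r, x] := by
  have := h.polynomial_aeval_of_transcendental (f := ![Polynomial.X, -Polynomial.X])
    (Fin.forall_fin_two.2 ⟨Polynomial.transcendental_X R, fun h =>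
      Polynomial.transcendental_X R (by simpa using h.neg)⟩)
  convert this using 1
  ext i
  fin_cases i <;> simp

theorem sq_derivation_apply_lt {r x : ℝ*} (hr : r.Tendsto atTop)
    (hrx : ¬ AlgebraicIndependent ℝ ![r, x]) {M : ℝ} (hx : x ^ 2 ≤ M) {D : Derivation ℝ ℝ* ℝ*}
    (hD : D r = r) {δ : ℝ} (hδ : 0 < δ) : D x ^ 2 < δ := by
  have hδ' : ((√δ : ℝ) : ℝ*) ^ 2 = δ :=
    (map_pow (algebraMap ℝ ℝ*) √δ 2).symm.trans (congrArg _ (Real.sq_sqrt hδ.le))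
  have hM : ((M + 1 : ℝ) : ℝ*) = M + 1 := rfl
  have hle : x ≤ (M + 1 : ℝ) := by nlinarith [sq_nonneg (x - 1)]
  have hge : -x ≤ (M + 1 : ℝ) := by nlinarith [sq_nonneg (x + 1)]
  rw [← hδ']
  refine sq_lt_sq' (neg_lt.1 ?_) (derivation_apply_lt_of_le hr hrx hle hD (Real.sqrt_pos.2 hδ))
  rw [← map_neg]
  exact derivation_apply_lt_of_le hr (mt algebraicIndependent_pair_neg hrx) hge hD
    (Real.sqrt_pos.2 hδ)

end AlgebraicFunctions

section CriticalSection

open MvPolynomial Topology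
open Hyperreal (ofSeq ofSeq_lt_ofSeq ofSeq_le_ofSeq)

/-- The Jacobian determinant of `(P, Φ)` in the last two of three variables. On the plane curves cut
out by `P = 0` and `X 0 = const`, it vanishes at the critical points of `Φ`. -/
def planeJacobian (P Φ : MvPolynomial (Fin 3) ℝ) : MvPolynomial (Fin 3) ℝ :=
  pderiv 1 P * pderiv 2 Φ - pderiv 2 P * pderiv 1 Φ

theorem eval_planeJacobian_eq_zero_of_isLocalExtrOn {P Φ : MvPolynomial (Fin 3) ℝ} {q : Fin 3 → ℝ}
    (h : IsLocalExtrOn (fun x => eval x Φ) {x | x 0 = q 0 ∧ eval x P = eval q P} q) :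
    eval q (planeJacobian P Φ) = 0 := by
  have h' : IsLocalExtrOn (fun x => eval x Φ)
      {x | ∀ i, eval x (![X 0, P] i) = eval q (![X 0, P] i)} q := by
    simpa only [Fin.forall_fin_two, Matrix.cons_val_zero, Matrix.cons_val_one, eval_X] using h
  obtain ⟨Λ, μ, hΛμ, hsum⟩ := h'.exists_multipliers_of_hasStrictFDerivAt
    (fun i => hasStrictFDerivAt_eval _ q) (hasStrictFDerivAt_eval Φ q)
  have hcoord (i : Fin 3) : Λ 0 * eval q (pderiv i (X 0)) + Λ 1 * eval q (pderiv i P) +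
      μ * eval q (pderiv i Φ) = 0 := by
    simpa [Fin.sum_univ_two, Pi.single_apply] using DFunLike.congr_fun hsum (Pi.single i 1)
  have h0 := hcoord 0
  have h1 := hcoord 1
  have h2 := hcoord 2
  simp only [pderiv_X_self, pderiv_X_of_ne (show (0 : Fin 3) ≠ 1 by decide),
    pderiv_X_of_ne (show (0 : Fin 3) ≠ 2 by decide), map_one, map_zero, mul_zero, mul_one,
    zero_add] at h0 h1 h2
  have hμJ : μ * eval q (planeJacobian P Φ) = 0 := by
    simp only [planeJacobian, map_sub, map_mul]
    linear_combination eval q (pderiv 1 P) * h2 - eval q (pderiv 2 P) * h1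
  have hΛJ : Λ 1 * eval q (planeJacobian P Φ) = 0 := by
    simp only [planeJacobian, map_sub, map_mul]
    linear_combination eval q (pderiv 2 Φ) * h1 - eval q (pderiv 1 Φ) * h2
  by_contra hJ
  have hμ : μ = 0 := (mul_eq_zero.1 hμJ).resolve_right hJ
  have hΛ1 : Λ 1 = 0 := (mul_eq_zero.1 hΛJ).resolve_right hJ
  have hΛ0 : Λ 0 = 0 := by simpa [hμ, hΛ1] using h0
  exact hΛμ (Prod.ext (funext (Fin.forall_fin_two.2 ⟨hΛ0, hΛ1⟩)) hμ)

theorem exists_eval_planeJacobian_eq_zero {P Φ : MvPolynomial (Fin 3) ℝ} {B : ℝ}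
    (hΦ : ∀ q : Fin 3 → ℝ, q 1 ^ 2 + q 2 ^ 2 = B → eval q Φ ≤ 0) {p : Fin 3 → ℝ}
    (hpB : p 1 ^ 2 + p 2 ^ 2 ≤ B) (hpP : eval p P = 0) (hpΦ : 0 < eval p Φ) :
    ∃ q : Fin 3 → ℝ, q 0 = p 0 ∧ q 1 ^ 2 + q 2 ^ 2 ≤ B ∧ eval q P = 0 ∧ 0 < eval q Φ ∧
      eval q (planeJacobian P Φ) = 0 := by
  let K : Set (Fin 3 → ℝ) := {q | q 1 ^ 2 + q 2 ^ 2 ≤ B ∧ q 0 = p 0 ∧ eval q P = 0}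
  have hK_box : K ⊆ Set.Icc ![p 0, -√B, -√B] ![p 0, √B, √B] := fun q ⟨hqB, hq, _⟩ => by
    have h1 := abs_le.1 (Real.abs_le_sqrt (by linarith [sq_nonneg (q 2)] : q 1 ^ 2 ≤ B))
    have h2 := abs_le.1 (Real.abs_le_sqrt (by linarith [sq_nonneg (q 1)] : q 2 ^ 2 ≤ B))
    simp [Pi.le_def, Fin.forall_fin_succ, hq, h1, h2]
  have hnorm : Continuous fun q : Fin 3 → ℝ => q 1 ^ 2 + q 2 ^ 2 := by fun_prop
  have hK : IsCompact K := isCompact_Icc.of_isClosed_subset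
    ((isClosed_le hnorm continuous_const).inter
      ((isClosed_eq (continuous_apply 0) continuous_const).inter
        (isClosed_eq (MvPolynomial.continuous_eval P) continuous_const))) hK_box
  obtain ⟨q, ⟨hqB, hq, hqP⟩, hmax⟩ :=
    hK.exists_isMaxOn ⟨p, hpB, rfl, hpP⟩ (MvPolynomial.continuous_eval Φ).continuousOn
  have hqΦ : 0 < eval q Φ := hpΦ.trans_le (hmax ⟨hpB, rfl, hpP⟩)
  refine ⟨q, hq, hqB, hqP, hqΦ, eval_planeJacobian_eq_zero_of_isLocalExtrOn (Or.inr ?_)⟩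
  have hqB' : q 1 ^ 2 + q 2 ^ 2 < B := hqB.lt_of_ne fun h => (hΦ q h).not_gt hqΦ
  have hnear : ∀ᶠ x : Fin 3 → ℝ in 𝓝 q, x 1 ^ 2 + x 2 ^ 2 < B :=
    hnorm.continuousAt.eventually_lt_const hqB'
  filter_upwards [nhdsWithin_le_nhds hnear, self_mem_nhdsWithin] with x hxB ⟨hx, hxP⟩
  exact hmax ⟨hxB.le, hx.trans hq, hxP.trans hqP⟩

theorem exists_aeval_planeJacobian_eq_zero {P Φ : MvPolynomial (Fin 3) ℝ} {B : ℝ}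
    (hΦ : ∀ q : Fin 3 → ℝ, q 1 ^ 2 + q 2 ^ 2 = B → eval q Φ ≤ 0) {p : Fin 3 → ℝ*}
    (hpB : p 1 ^ 2 + p 2 ^ 2 ≤ B) (hpP : aeval p P = 0) (hpΦ : 0 < aeval p Φ) :
    ∃ q : Fin 3 → ℝ*, q 0 = p 0 ∧ q 1 ^ 2 + q 2 ^ 2 ≤ B ∧ aeval q P = 0 ∧ 0 < aeval q Φ ∧
      aeval q (planeJacobian P Φ) = 0 := by
  obtain ⟨ρ, rfl⟩ := exists_ofSeq_eq p
  rw [aeval_ofSeq] at hpP hpΦ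
  obtain ⟨q, hq⟩ := ((ofSeq_le_ofSeq.1 hpB).and ((ofSeq_eq_zero.1 hpP).and
    (ofSeq_lt_ofSeq.1 hpΦ))).mono (fun _ ⟨hB, hP, hΦk⟩ =>
      exists_eval_planeJacobian_eq_zero hΦ hB hP hΦk) |>.choice
  simp only [eventually_and] at hq
  obtain ⟨hq0, hqB, hqP, hqΦ, hqJ⟩ := hq
  refine ⟨fun i => ofSeq fun k => q k i, Germ.coe_eq.2 hq0, ofSeq_le_ofSeq.2 hqB, ?_, ?_, ?_⟩ <;>
    rw [aeval_ofSeq]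
  · exact ofSeq_eq_zero.2 hqP
  · exact ofSeq_lt_ofSeq.2 hqΦ
  · exact ofSeq_eq_zero.2 hqJ

theorem exists_aeval_planeJacobian_mul_ne_zero {P Q : MvPolynomial (Fin 3) ℝ} {p : Fin 3 → ℝ*}
    (hP : aeval p (pderiv 2 P) ≠ 0) (hQ : aeval p Q ≠ 0) (B : ℝ) :
    ∃ V : MvPolynomial (Fin 3) ℝ, aeval p (planeJacobian P (Q * V)) ≠ 0 ∧
      ∀ q : Fin 3 → ℝ, q 1 ^ 2 ≤ B → 0 < eval q V := by
  by_cases hJ : aeval p (planeJacobian P Q) = 0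
  · refine ⟨C (B + 1) + X 1, ?_, fun q hq => ?_⟩
    · have hJV : planeJacobian P (Q * (C (B + 1) + X 1)) =
          planeJacobian P Q * (C (B + 1) + X 1) - Q * pderiv 2 P := by
        simp only [planeJacobian, Derivation.leibniz, map_add, pderiv_C, smul_eq_mul,
          pderiv_X_self, pderiv_X_of_ne (show (1 : Fin 3) ≠ 2 by decide)]
        ring
      rw [hJV, map_sub, map_mul, hJ, zero_mul, zero_sub, map_mul, neg_ne_zero]
      exact mul_ne_zero hQ hP
    · simp only [map_add, eval_C, eval_X]
      nlinarith [sq_nonneg (q 1 + 1)]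
  · exact ⟨1, by rwa [mul_one], by simp⟩

end CriticalSection

section SectionSpeed

open MvPolynomial
open Hyperreal (ofSeq_lt_ofSeq ofSeq_le_ofSeq)

theorem aeval_pos_of_eval_pos {V : MvPolynomial (Fin 3) ℝ} {B : ℝ}
    (hV : ∀ q : Fin 3 → ℝ, q 1 ^ 2 ≤ B → 0 < eval q V) {p : Fin 3 → ℝ*} (hp : p 1 ^ 2 ≤ B) :
    0 < aeval p V := by
  obtain ⟨ρ, rfl⟩ := exists_ofSeq_eq p
  rw [aeval_ofSeq]
  exact ofSeq_lt_ofSeq.2 ((ofSeq_le_ofSeq.1 hp).mono fun k hk => hV (ρ k) hk)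

theorem not_algebraicIndependent_of_not_dvd {P E : MvPolynomial (Fin 3) ℝ} (hP : Irreducible P)
    (hPE : ¬ P ∣ E) {q : Fin 3 → ℝ*} (hqP : aeval q P = 0) (hqE : aeval q E = 0) :
    ¬ AlgebraicIndependent ℝ ![q 0, q 1] ∧ ¬ AlgebraicIndependent ℝ ![q 0, q 2] := by
  have hq1 : ![q 0, q 1] = q ∘ ![0, 1] := funext (Fin.forall_fin_two.2 ⟨rfl, rfl⟩)
  have hq2 : ![q 0, q 2] = q ∘ ![0, 2] := funext (Fin.forall_fin_two.2 ⟨rfl, rfl⟩)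
  rw [hq1, hq2]
  constructor <;> intro h
  · have h' := algebraicIndependent_subtype_ne_of_comp (p := q) (i := 2) (by decide) h
    exact hPE (dvd_of_irreducible_of_aeval_eq_zero hP hqP hqE h')
  · have h' := algebraicIndependent_subtype_ne_of_comp (p := q) (i := 1) (by decide) h
    exact hPE (dvd_of_irreducible_of_aeval_eq_zero hP hqP hqE h')

theorem exists_not_algebraicIndependent_of_aeval_pos {P Q : MvPolynomial (Fin 3) ℝ}
    (hP : Irreducible P) {p : Fin 3 → ℝ*} {B : ℝ} (hpB : p 1 ^ 2 + p 2 ^ 2 ≤ B)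
    (hpP : aeval p P = 0) (hpd : aeval p (pderiv 2 P) ≠ 0) (hpQ : 0 < aeval p Q) :
    ∃ q : Fin 3 → ℝ*, q 0 = p 0 ∧ q 1 ^ 2 + q 2 ^ 2 ≤ (B + 1 : ℝ) ∧ aeval q P = 0 ∧
      0 < aeval q Q ∧ ¬ AlgebraicIndependent ℝ ![q 0, q 1] ∧
      ¬ AlgebraicIndependent ℝ ![q 0, q 2] := by
  -- `U` vanishes on the boundary of the disc, so `Q * U * V` has an interior maximum. `V` makes the
  -- Jacobian of `P` and `Q * U * V` nonzero at `p`, so `P` does not divide it and the coordinates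
  -- of a critical point are algebraic over `ℝ(q 0)`.
  let U : MvPolynomial (Fin 3) ℝ := C (B + 1) - (X 1 ^ 2 + X 2 ^ 2)
  have hU (q : Fin 3 → ℝ*) : aeval q U = (B + 1 : ℝ) - (q 1 ^ 2 + q 2 ^ 2) := by
    simp only [U, map_sub, map_add, map_pow, aeval_X, aeval_C, algebraMap_hyperreal]
    rfl
  have hB : (B : ℝ*) < (B + 1 : ℝ) := Hyperreal.coe_lt_coe.2 (lt_add_one B)
  have hpU : 0 < aeval p U := by
    rw [hU]
    exact sub_pos.2 (hpB.trans_lt hB)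
  have hpQU : 0 < aeval p (Q * U) := by
    rw [map_mul]
    exact mul_pos hpQ hpU
  obtain ⟨V, hJV, hV⟩ := exists_aeval_planeJacobian_mul_ne_zero hpd hpQU.ne' (B + 1)
  have hV_pos {q : Fin 3 → ℝ*} (hq : q 1 ^ 2 + q 2 ^ 2 ≤ (B + 1 : ℝ)) : 0 < aeval q V :=
    aeval_pos_of_eval_pos hV ((le_add_of_nonneg_right (sq_nonneg _)).trans hq)
  have hΦ (q : Fin 3 → ℝ) (hq : q 1 ^ 2 + q 2 ^ 2 = B + 1) : eval q (Q * U * V) ≤ 0 := by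
    have hqU : eval q U = 0 := by
      simp only [U, map_sub, map_add, map_pow, eval_X, eval_C, hq, sub_self]
    rw [map_mul, map_mul, hqU, mul_zero, zero_mul]
  have hpΦ : 0 < aeval p (Q * U * V) := by
    rw [map_mul]
    exact mul_pos hpQU (hV_pos (hpB.trans hB.le))
  obtain ⟨q, hq0, hqB, hqP, hqΦ, hqJ⟩ :=
    exists_aeval_planeJacobian_eq_zero hΦ (hpB.trans hB.le) hpP hpΦ
  rw [map_mul, map_mul, mul_assoc] at hqΦ
  have hqU : 0 ≤ aeval q U := by
    rw [hU]
    exact sub_nonneg.2 hqB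
  refine ⟨q, hq0, hqB, hqP, pos_of_mul_pos_left hqΦ (mul_nonneg hqU (hV_pos hqB).le),
    not_algebraicIndependent_of_not_dvd hP (fun hdvd => hJV ?_) hqP hqJ⟩
  exact zero_dvd_iff.1 (hpP ▸ map_dvd (aeval p) hdvd)

/-- The polynomial whose positivity at a point of the surface `P = 0` says that the plane section
through this point moves with speed greater than `√δ` in terms of `log (X 0)`. -/
def speedExcess (P : MvPolynomial (Fin 3) ℝ) (δ : ℝ) : MvPolynomial (Fin 3) ℝ :=
  (X 0 * pderiv 0 P) ^ 2 - C δ * (pderiv 1 P ^ 2 + pderiv 2 P ^ 2)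

theorem aeval_speedExcess (P : MvPolynomial (Fin 3) ℝ) (δ : ℝ) (p : Fin 3 → ℝ*) :
    aeval p (speedExcess P δ) = (p 0 * aeval p (pderiv 0 P)) ^ 2 -
      δ * (aeval p (pderiv 1 P) ^ 2 + aeval p (pderiv 2 P) ^ 2) := by
  simp only [speedExcess, map_sub, map_mul, map_pow, map_add, aeval_X, aeval_C,
    algebraMap_hyperreal]

theorem exists_euler_derivation {r : ℝ*} (hr : r.Tendsto atTop) :
    ∃ D : Derivation ℝ ℝ* ℝ*, D r = r := by
  obtain ⟨D, hD⟩ := exists_derivation_apply_eq (k := ℝ) (x := fun _ : Unit => r)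
    (algebraicIndependent_unique_type_iff.2 (transcendental_of_tendsto_atTop hr)) fun _ => r
  exact ⟨D, hD ()⟩

theorem sq_inner_derivation_apply_le {r x y : ℝ*} (hr : r.Tendsto atTop)
    (hrx : ¬ AlgebraicIndependent ℝ ![r, x]) (hry : ¬ AlgebraicIndependent ℝ ![r, y]) {B : ℝ}
    (hB : x ^ 2 + y ^ 2 ≤ B) {D : Derivation ℝ ℝ* ℝ*} (hD : D r = r) {δ : ℝ} (hδ : 0 < δ)
    (a b : ℝ*) : (a * D x + b * D y) ^ 2 ≤ δ * (a ^ 2 + b ^ 2) := by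
  have hx := sq_derivation_apply_lt hr hrx ((le_add_of_nonneg_right (sq_nonneg y)).trans hB) hD
    (half_pos hδ)
  have hy := sq_derivation_apply_lt hr hry ((le_add_of_nonneg_left (sq_nonneg x)).trans hB) hD
    (half_pos hδ)
  have hδ' : (δ : ℝ*) = (δ / 2 : ℝ) + (δ / 2 : ℝ) := congrArg Hyperreal.ofReal (add_halves δ).symm
  calc
    (a * D x + b * D y) ^ 2 ≤ (a ^ 2 + b ^ 2) * (D x ^ 2 + D y ^ 2) := by
      nlinarith [sq_nonneg (a * D y - b * D x)]
    _ ≤ (a ^ 2 + b ^ 2) * δ := by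
      rw [hδ']
      gcongr
    _ = δ * (a ^ 2 + b ^ 2) := mul_comm _ _

theorem aeval_speedExcess_nonpos_of_not_algebraicIndependent {P : MvPolynomial (Fin 3) ℝ}
    {q : Fin 3 → ℝ*} (hq : (q 0).Tendsto atTop) {B : ℝ} (hqB : q 1 ^ 2 + q 2 ^ 2 ≤ B)
    (hqP : aeval q P = 0) (h1 : ¬ AlgebraicIndependent ℝ ![q 0, q 1])
    (h2 : ¬ AlgebraicIndependent ℝ ![q 0, q 2]) {δ : ℝ} (hδ : 0 < δ) :
    aeval q (speedExcess P δ) ≤ 0 := by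
  obtain ⟨D, hD⟩ := exists_euler_derivation hq
  have hchain : aeval q (pderiv 0 P) * q 0 +
      aeval q (pderiv 1 P) * D (q 1) + aeval q (pderiv 2 P) * D (q 2) = 0 := by
    simpa [hqP, Fin.sum_univ_three, hD] using (derivation_aeval D q P).symm
  rw [aeval_speedExcess, sub_nonpos]
  convert sq_inner_derivation_apply_le hq h1 h2 hqB hD hδ (aeval q (pderiv 1 P))
    (aeval q (pderiv 2 P)) using 1
  rw [sq_eq_sq_iff_eq_or_eq_neg]
  exact Or.inr (by linear_combination hchain)

theorem aeval_speedExcess_nonpos {P : MvPolynomial (Fin 3) ℝ} (hP : Irreducible P)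
    {p : Fin 3 → ℝ*} (hp : (p 0).Tendsto atTop) {B : ℝ} (hpB : p 1 ^ 2 + p 2 ^ 2 ≤ B)
    (hpP : aeval p P = 0) (hpd : aeval p (pderiv 2 P) ≠ 0) {δ : ℝ} (hδ : 0 < δ) :
    aeval p (speedExcess P δ) ≤ 0 := by
  by_contra! hpos
  obtain ⟨q, hq0, hqB, hqP, hqpos, h1, h2⟩ :=
    exists_not_algebraicIndependent_of_aeval_pos hP hpB hpP hpd hpos
  exact (aeval_speedExcess_nonpos_of_not_algebraicIndependent (hq0 ▸ hp) hqB hqP h1 h2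
    hδ).not_gt hqpos

theorem aeval_pderiv_two_ne_zero_and_sq_aeval_pderiv_zero_eq
    {P : MvPolynomial (Fin 3) ℝ} {r g h a b m : ℝ*}
    (hrg : AlgebraicIndependent ℝ ![r, g]) (hP : aeval ![r, g, h] P = 0)
    (hPd : ∃ i, aeval ![r, g, h] (pderiv i P) ≠ 0) (hab : a ^ 2 + b ^ 2 = 1)
    (hD : ∀ D : Derivation ℝ ℝ* ℝ*, m * D r = a * D g + b * D h) :
    aeval ![r, g, h] (pderiv 2 P) ≠ 0 ∧ aeval ![r, g, h] (pderiv 0 P) ^ 2 =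
      m ^ 2 * (aeval ![r, g, h] (pderiv 1 P) ^ 2 + aeval ![r, g, h] (pderiv 2 P) ^ 2) := by
  have hchain (D : Derivation ℝ ℝ* ℝ*) : aeval ![r, g, h] (pderiv 0 P) * D r +
      aeval ![r, g, h] (pderiv 1 P) * D g + aeval ![r, g, h] (pderiv 2 P) * D h = 0 := by
    simpa [hP, Fin.sum_univ_three] using (derivation_aeval D ![r, g, h] P).symm
  obtain ⟨D, hDx⟩ := exists_derivation_apply_eq hrg ![1, 0]
  obtain ⟨E, hEx⟩ := exists_derivation_apply_eq hrg ![0, 1]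
  have hDr : D r = 1 := hDx 0
  have hDg : D g = 0 := hDx 1
  have hEr : E r = 0 := hEx 0
  have hEg : E g = 1 := hEx 1
  have hP0 : aeval ![r, g, h] (pderiv 0 P) = -(aeval ![r, g, h] (pderiv 2 P) * D h) :=
    eq_neg_of_add_eq_zero_left (by simpa [hDr, hDg] using hchain D)
  have hP1 : aeval ![r, g, h] (pderiv 1 P) = -(aeval ![r, g, h] (pderiv 2 P) * E h) :=
    eq_neg_of_add_eq_zero_left (by simpa [hEr, hEg] using hchain E)
  have hm : m = b * D h := by simpa [hDr, hDg] using hD D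
  have ha : a = -(b * E h) :=
    eq_neg_of_add_eq_zero_left (by simpa [hEr, hEg] using (hD E).symm)
  refine ⟨fun hP2 => ?_, ?_⟩
  · obtain ⟨i, hi⟩ := hPd
    fin_cases i
    · exact hi (by simp [hP0, hP2])
    · exact hi (by simp [hP1, hP2])
    · exact hi hP2
  · rw [ha] at hab
    rw [hP0, hP1, hm]
    linear_combination -(aeval ![r, g, h] (pderiv 2 P) * D h) ^ 2 * hab

theorem sq_mul_le_of_algebraicIndependent {r g h a b m : ℝ*} (hr : r.Tendsto atTop) {B : ℝ}
    (hB : g ^ 2 + h ^ 2 ≤ B) (hab : a ^ 2 + b ^ 2 = 1)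
    (hD : ∀ D : Derivation ℝ ℝ* ℝ*, m * D r = a * D g + b * D h)
    (hrg : AlgebraicIndependent ℝ ![r, g]) {δ : ℝ} (hδ : 0 < δ) : (m * r) ^ 2 ≤ δ := by
  by_cases hrgh : AlgebraicIndependent ℝ ![r, g, h]
  · obtain ⟨D, hDx⟩ := exists_derivation_apply_eq hrgh ![1, 0, 0]
    have hDr : D r = 1 := hDx 0
    have hDg : D g = 0 := hDx 1
    have hDh : D h = 0 := hDx 2
    have hm : m = 0 := by simpa [hDr, hDg, hDh] using hD D
    simpa [hm] using Hyperreal.coe_le_coe.2 hδ.le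
  obtain ⟨P, hP, hPp, hPd⟩ := exists_irreducible_aeval_eq_zero hrgh
  obtain ⟨hPh, hm⟩ := aeval_pderiv_two_ne_zero_and_sq_aeval_pderiv_zero_eq hrg hPp hPd hab hD
  have hexcess := aeval_speedExcess_nonpos hP (p := ![r, g, h]) hr hB hPp hPh hδ
  rw [aeval_speedExcess, mul_pow, hm, Matrix.cons_val_zero, sub_nonpos, ← mul_assoc, ← mul_pow,
    mul_comm r] at hexcess
  exact le_of_mul_le_mul_right hexcess (by positivity)

theorem sq_mul_le_of_derivation {r g h a b m : ℝ*} (hr : r.Tendsto atTop) {B : ℝ}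
    (hB : g ^ 2 + h ^ 2 ≤ B) (hab : a ^ 2 + b ^ 2 = 1)
    (hD : ∀ D : Derivation ℝ ℝ* ℝ*, m * D r = a * D g + b * D h) {δ : ℝ} (hδ : 0 < δ) :
    (m * r) ^ 2 ≤ δ := by
  by_cases hrg : AlgebraicIndependent ℝ ![r, g]
  · exact sq_mul_le_of_algebraicIndependent hr hB hab hD hrg hδ
  by_cases hrh : AlgebraicIndependent ℝ ![r, h]
  · exact sq_mul_le_of_algebraicIndependent hr (add_comm (g ^ 2) _ ▸ hB)
      (add_comm (a ^ 2) _ ▸ hab) (fun D => (hD D).trans (add_comm _ _)) hrh hδ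
  obtain ⟨D, hDr⟩ := exists_euler_derivation hr
  have hmr : m * r = a * D g + b * D h := hDr ▸ hD D
  rw [hmr]
  simpa [hab] using sq_inner_derivation_apply_le hr hrg hrh hB hDr hδ a b

end SectionSpeed

section RealPolynomials

open MvPolynomial Topology
open Hyperreal (ofSeq ofSeq_le_ofSeq tendsto_ofSeq)

variable {σ : Type*} [Fintype σ] {G H : MvPolynomial σ ℝ}

theorem sq_mul_sum_sq_le {x : σ → ℝ*} (hx : (∑ j, x j ^ 2).Tendsto atTop) {B : ℝ}
    (hB : aeval x G ^ 2 + aeval x H ^ 2 ≤ B) {a b l : ℝ*} (hab : a ^ 2 + b ^ 2 = 1)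
    (hlin : ∀ j, a * aeval x (pderiv j G) + b * aeval x (pderiv j H) = l * x j) {δ : ℝ}
    (hδ : 0 < δ) : (l * ∑ j, x j ^ 2) ^ 2 ≤ δ := by
  have hδ' : (δ : ℝ*) = 4 * (δ / 4 : ℝ) := by
    have h := map_mul (algebraMap ℝ ℝ*) 4 (δ / 4)
    rwa [mul_div_cancel₀ δ four_ne_zero, map_ofNat] at h
  have hD (D : Derivation ℝ ℝ* ℝ*) :
      l / 2 * D (∑ j, x j ^ 2) = a * D (aeval x G) + b * D (aeval x H) := by
    have hsum : D (∑ j, x j ^ 2) = 2 * ∑ j, x j * D (x j) := by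
      simp [Derivation.leibniz_pow, Finset.mul_sum]
    rw [hsum, ← mul_assoc, div_mul_cancel₀ l two_ne_zero, derivation_aeval, derivation_aeval,
      Finset.mul_sum, Finset.mul_sum, Finset.mul_sum, ← Finset.sum_add_distrib]
    exact Finset.sum_congr rfl fun j _ => by linear_combination -D (x j) * hlin j
  have hle := sq_mul_le_of_derivation hx hB hab hD (δ := δ / 4) (by positivity)
  rw [hδ']
  linear_combination 4 * hle

theorem exists_sq_mul_sum_sq_le {x : ℕ → σ → ℝ}
    (hx : Tendsto (fun k => ∑ j, x k j ^ 2) atTop atTop)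
    {B : ℝ} (hB : ∀ k, eval (x k) G ^ 2 + eval (x k) H ^ 2 ≤ B) {a b l : ℕ → ℝ}
    (hab : ∀ k, a k ^ 2 + b k ^ 2 = 1)
    (hlin : ∀ k j, a k * eval (x k) (pderiv j G) + b k * eval (x k) (pderiv j H) = l k * x k j)
    {δ : ℝ} (hδ : 0 < δ) : ∃ k, (l k * ∑ j, x k j ^ 2) ^ 2 ≤ δ := by
  let ξ (j : σ) : ℝ* := ofSeq fun k => x k j
  have hsum : ∑ j, ξ j ^ 2 = ofSeq fun k => ∑ j, x k j ^ 2 := by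
    have h := aeval_ofSeq x (∑ j, X j ^ 2 : MvPolynomial σ ℝ)
    simpa only [map_sum, map_pow, aeval_X, eval_X] using h
  have hle : (ofSeq l * ∑ j, ξ j ^ 2) ^ 2 ≤ δ := by
    refine sq_mul_sum_sq_le (G := G) (H := H) (B := B) (a := ofSeq a) (b := ofSeq b) ?_ ?_ ?_ ?_ hδ
    · rw [hsum, tendsto_ofSeq]
      exact hx.mono_left Nat.hyperfilter_le_atTop
    · rw [aeval_ofSeq, aeval_ofSeq]
      exact ofSeq_le_ofSeq.2 (Eventually.of_forall hB)
    · exact Germ.coe_eq.2 (Eventually.of_forall hab)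
    · intro j
      rw [aeval_ofSeq, aeval_ofSeq]
      exact Germ.coe_eq.2 (Eventually.of_forall fun k => hlin k j)
  rw [hsum] at hle
  exact (ofSeq_le_ofSeq.1 hle).exists

theorem tendsto_mul_sum_sq_zero {x : ℕ → σ → ℝ}
    (hx : Tendsto (fun k => ∑ j, x k j ^ 2) atTop atTop) {B : ℝ}
    (hB : ∀ k, eval (x k) G ^ 2 + eval (x k) H ^ 2 ≤ B) {a b l : ℕ → ℝ}
    (hab : ∀ k, a k ^ 2 + b k ^ 2 = 1)
    (hlin : ∀ k j, a k * eval (x k) (pderiv j G) + b k * eval (x k) (pderiv j H) = l k * x k j) :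
    Tendsto (fun k => l k * ∑ j, x k j ^ 2) atTop (𝓝 0) := by
  by_contra hlim
  obtain ⟨ε, hε, hfreq⟩ : ∃ ε > 0, ∃ᶠ k in atTop, ε ≤ |l k * ∑ j, x k j ^ 2| := by
    simpa [Metric.tendsto_nhds, Filter.Frequently] using hlim
  obtain ⟨φ, hφ, hφε⟩ := extraction_of_frequently_atTop hfreq
  obtain ⟨k, hk⟩ := exists_sq_mul_sum_sq_le (hx.comp hφ.tendsto_atTop) (fun k => hB (φ k))
    (fun k => hab (φ k)) (fun k => hlin (φ k)) (δ := (ε / 2) ^ 2) (by positivity)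
  have hk' : |l (φ k) * ∑ j, x (φ k) j ^ 2| ≤ ε / 2 := abs_le_of_sq_le_sq hk (by positivity)
  linarith [hφε k]

end RealPolynomials

section MixedPolynomials

open MvPolynomial Topology
open scoped ComplexConjugate

variable {n : ℕ}

/-- The conjugate coordinates `(z, z̄)` on `ℂⁿ`. -/
def conjCoords (n : ℕ) : (Fin n → ℂ) →L[ℝ] Fin n ⊕ Fin n → ℂ :=
  .pi (Sum.elim (fun i => .proj i) fun i => (conjCLE : ℂ →L[ℝ] ℂ) ∘L .proj i)

/-- The real coordinates `(Re z, Im z)` on `ℂⁿ`. -/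
def realCoords (n : ℕ) : (Fin n → ℂ) →L[ℝ] Fin n ⊕ Fin n → ℝ :=
  .pi (Sum.elim (fun i => reCLM ∘L .proj i) fun i => imCLM ∘L .proj i)

@[simp] theorem conjCoords_inl (z : Fin n → ℂ) (i : Fin n) : conjCoords n z (.inl i) = z i := rfl

@[simp] theorem conjCoords_inr (z : Fin n → ℂ) (i : Fin n) :
    conjCoords n z (.inr i) = conj (z i) := rfl

@[simp] theorem realCoords_inl (z : Fin n → ℂ) (i : Fin n) :
    realCoords n z (.inl i) = (z i).re := rfl

@[simp] theorem realCoords_inr (z : Fin n → ℂ) (i : Fin n) :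
    realCoords n z (.inr i) = (z i).im := rfl

/-- The polynomial `P` in `2n` variables with `f(z) = P(z, z̄)`. -/
def toMvPolynomial (c : MixedCoeff n) : MvPolynomial (Fin n ⊕ Fin n) ℂ :=
  c.sum fun p a => monomial (Finsupp.equivFunOnFinite.symm (Sum.elim p.1 p.2)) a

theorem eval_toMvPolynomial (c : MixedCoeff n) (z : Fin n → ℂ) :
    eval (conjCoords n z) (toMvPolynomial c) = Mixed.eval c z := by
  simp only [Mixed.eval, toMvPolynomial, Finsupp.sum, map_sum, eval_monomial]
  refine Finset.sum_congr rfl fun p _ => ?_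
  rw [Finsupp.prod_fintype _ _ (by simp), Fintype.prod_sum_type]
  simp [mul_assoc]

theorem eval_pderiv_inl_toMvPolynomial (c : MixedCoeff n) (z : Fin n → ℂ) (i : Fin n) :
    eval (conjCoords n z) (pderiv (.inl i) (toMvPolynomial c)) = Mixed.dz c i z := by
  simp only [Mixed.dz, toMvPolynomial, Finsupp.sum, map_sum, pderiv_monomial, eval_monomial]
  refine Finset.sum_congr rfl fun p _ => ?_
  rw [Finsupp.prod_fintype _ _ (by simp), Fintype.prod_sum_type]
  simp [mul_assoc, Finsupp.single_apply, eq_comm]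

theorem eval_pderiv_inr_toMvPolynomial (c : MixedCoeff n) (z : Fin n → ℂ) (i : Fin n) :
    eval (conjCoords n z) (pderiv (.inr i) (toMvPolynomial c)) = Mixed.dzbar c i z := by
  simp only [Mixed.dzbar, toMvPolynomial, Finsupp.sum, map_sum, pderiv_monomial, eval_monomial]
  refine Finset.sum_congr rfl fun p _ => ?_
  rw [Finsupp.prod_fintype _ _ (by simp), Fintype.prod_sum_type]
  simp [mul_assoc, Finsupp.single_apply, eq_comm]

theorem exists_hasFDerivAt_eval (c : MixedCoeff n) (z : Fin n → ℂ) :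
    ∃ L : (Fin n → ℂ) →L[ℝ] ℂ, HasFDerivAt (Mixed.eval c) L z ∧
      ∀ u, L u = ∑ i, (Mixed.dz c i z * u i + Mixed.dzbar c i z * conj (u i)) := by
  have h := hasStrictFDerivAt_eval (toMvPolynomial c) (conjCoords n z)
  have h' := (h.hasFDerivAt.restrictScalars ℝ).comp z (conjCoords n).hasFDerivAt
  refine ⟨_, h'.congr_of_eventuallyEq (.of_forall fun w => (eval_toMvPolynomial c w).symm), ?_⟩
  intro u
  simp [Finset.sum_add_distrib, eval_pderiv_inl_toMvPolynomial, eval_pderiv_inr_toMvPolynomial]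

theorem re_mul_gradient_add_im_mul_gradient {c : MixedCoeff n} {z v w : Fin n → ℂ}
    (hv : ∀ u, fderiv ℝ (fun x => (Mixed.eval c x).re) z u = (∑ i, u i * conj (v i)).re)
    (hw : ∀ u, fderiv ℝ (fun x => (Mixed.eval c x).im) z u = (∑ i, u i * conj (w i)).re)
    (m : ℂ) (i : Fin n) :
    m.re * v i + m.im * w i = m * conj (Mixed.dz c i z) + conj m * Mixed.dzbar c i z := by
  obtain ⟨L, hL, hLu⟩ := exists_hasFDerivAt_eval c z
  have hsingle (t : ℂ) (y : Fin n → ℂ) :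
      ∑ j, (Pi.single i t : Fin n → ℂ) j * conj (y j) = t * conj (y i) := by
    simp [Pi.single_apply, ite_mul]
  have hLsingle (t : ℂ) :
      L (Pi.single i t) = Mixed.dz c i z * t + Mixed.dzbar c i z * conj t := by
    rw [hLu, Finset.sum_eq_single i (fun j _ hj => by simp [hj]) (by simp), Pi.single_eq_same]
  have hre : fderiv ℝ (fun x => (Mixed.eval c x).re) z = reCLM ∘L L :=
    (reCLM.hasFDerivAt.comp z hL).fderiv
  have him : fderiv ℝ (fun x => (Mixed.eval c x).im) z = imCLM ∘L L :=
    (imCLM.hasFDerivAt.comp z hL).fderiv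
  have hv' (t : ℂ) :
      (Mixed.dz c i z * t + Mixed.dzbar c i z * conj t).re = (t * conj (v i)).re := by
    rw [← hLsingle, ← hsingle, ← hv, hre]
    rfl
  have hw' (t : ℂ) :
      (Mixed.dz c i z * t + Mixed.dzbar c i z * conj t).im = (t * conj (w i)).re := by
    rw [← hLsingle, ← hsingle, ← hw, him]
    rfl
  have hvre : (v i).re = (Mixed.dz c i z).re + (Mixed.dzbar c i z).re := by
    simpa using (hv' 1).symm
  have hvim : (v i).im = (Mixed.dzbar c i z).im - (Mixed.dz c i z).im := by
    simpa [neg_add_eq_sub] using (hv' I).symm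
  have hwre : (w i).re = (Mixed.dz c i z).im + (Mixed.dzbar c i z).im := by
    simpa using (hw' 1).symm
  have hwim : (w i).im = (Mixed.dz c i z).re - (Mixed.dzbar c i z).re := by
    simpa [sub_eq_add_neg] using (hw' I).symm
  apply Complex.ext
  · simp only [add_re, mul_re, ofReal_re, ofReal_im, conj_re, conj_im, hvre, hwre]
    ring
  · simp only [add_im, mul_im, ofReal_re, ofReal_im, conj_re, conj_im, hvim, hwim]
    ring

theorem exists_smul_eq_of_mem_milnor {c : MixedCoeff n} {z v w : Fin n → ℂ}
    (hv : ∀ u, fderiv ℝ (fun x => (Mixed.eval c x).re) z u = (∑ i, u i * conj (v i)).re)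
    (hw : ∀ u, fderiv ℝ (fun x => (Mixed.eval c x).im) z u = (∑ i, u i * conj (w i)).re)
    (hz : z ∈ Mixed.Milnor c) :
    ∃ l a b : ℝ, a ^ 2 + b ^ 2 = 1 ∧ ∀ i, (a : ℂ) * v i + b * w i = l * z i := by
  obtain ⟨l, m, hm, hlm⟩ := hz
  have hm' : (‖m‖ : ℂ) ≠ 0 := ofReal_ne_zero.2 (norm_ne_zero_iff.2 hm)
  refine ⟨l / ‖m‖, m.re / ‖m‖, m.im / ‖m‖, ?_, fun i => ?_⟩
  · rw [div_pow, div_pow, ← add_div, ← Complex.sq_norm_sub_sq_re, add_sub_cancel]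
    exact div_self (pow_ne_zero 2 (norm_ne_zero_iff.2 hm))
  · have h := re_mul_gradient_add_im_mul_gradient hv hw m i
    rw [← hlm i] at h
    push_cast
    field_simp
    exact h

theorem exists_eval_conjCoords_eq (P : MvPolynomial (Fin n ⊕ Fin n) ℂ) :
    ∃ G H : MvPolynomial (Fin n ⊕ Fin n) ℝ, ∀ z : Fin n → ℂ,
      eval (conjCoords n z) P = eval (realCoords n z) G + eval (realCoords n z) H * I := by
  induction P using MvPolynomial.induction_on with
  | C a => exact ⟨C a.re, C a.im, fun z => by simp⟩
  | add P Q hP hQ =>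
    obtain ⟨G, H, hGH⟩ := hP
    obtain ⟨G', H', hGH'⟩ := hQ
    refine ⟨G + G', H + H', fun z => ?_⟩
    simp only [map_add, hGH, hGH', ofReal_add]
    ring
  | mul_X P j hP =>
    obtain ⟨G, H, hGH⟩ := hP
    rcases j with i | i
    · refine ⟨G * X (.inl i) - H * X (.inr i), G * X (.inr i) + H * X (.inl i), fun z => ?_⟩
      exact Complex.ext (by simp [hGH]) (by simp [hGH])
    · refine ⟨G * X (.inl i) + H * X (.inr i), H * X (.inl i) - G * X (.inr i), fun z => ?_⟩
      refine Complex.ext (by simp [hGH]) ?_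
      simp only [map_mul, map_sub, eval_X, hGH, mul_re, mul_im, add_re, add_im, ofReal_re,
        ofReal_im, I_re, I_im, conjCoords_inr, conj_re, conj_im, realCoords_inl, realCoords_inr]
      ring

theorem eval_realCoords_pderiv {φ : (Fin n → ℂ) → ℝ} {G : MvPolynomial (Fin n ⊕ Fin n) ℝ}
    (hG : ∀ z, φ z = eval (realCoords n z) G) {z v : Fin n → ℂ}
    (hv : ∀ u, fderiv ℝ φ z u = (∑ i, u i * conj (v i)).re) (j : Fin n ⊕ Fin n) :
    eval (realCoords n z) (pderiv j G) = realCoords n v j := by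
  have h := (hasStrictFDerivAt_eval G (realCoords n z)).hasFDerivAt.comp z
    (realCoords n).hasFDerivAt
  have hφ := (h.congr_of_eventuallyEq (f₁ := φ) (.of_forall hG)).fderiv
  rw [hφ] at hv
  rcases j with i | i
  · simpa [Pi.single_apply, apply_ite] using hv (Pi.single i 1)
  · simpa [Pi.single_apply, apply_ite] using hv (Pi.single i I)

theorem sq_norm2 (z : Fin n → ℂ) : Mixed.norm2 z ^ 2 = ∑ j, realCoords n z j ^ 2 := by
  rw [Mixed.norm2, Real.sq_sqrt (Finset.sum_nonneg fun i _ => normSq_nonneg _),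
    Fintype.sum_sum_type, ← Finset.sum_add_distrib]
  exact Finset.sum_congr rfl fun i _ => by simp [normSq_apply, sq]

theorem norm_le_norm2 (z : Fin n → ℂ) : ‖z‖ ≤ Mixed.norm2 z := by
  refine (pi_norm_le_iff_of_nonneg (Real.sqrt_nonneg _)).2 fun i => Real.le_sqrt_of_sq_le ?_
  rw [← normSq_eq_norm_sq]
  exact Finset.single_le_sum (f := fun i => normSq (z i)) (fun i _ => normSq_nonneg _)
    (Finset.mem_univ i)

theorem norm2_ofReal_mul (l : ℝ) (z : Fin n → ℂ) :
    Mixed.norm2 (fun i => (l : ℂ) * z i) = |l| * Mixed.norm2 z := by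
  simp only [Mixed.norm2, normSq_mul, normSq_ofReal, ← Finset.mul_sum]
  rw [Real.sqrt_mul (mul_self_nonneg l), Real.sqrt_mul_self_eq_abs]

/-- The function `ν = inf_{a² + b² = 1} ‖a v + b w‖`, which measures how far `v` and `w` are
from being linearly dependent over `ℝ`; it is applied to the gradients of `Re f` and `Im f`. -/
def rabierFunction (v w : Fin n → ℂ) : ℝ :=
  sInf {r : ℝ | ∃ a b : ℝ, a ^ 2 + b ^ 2 = 1 ∧
    r = Mixed.norm2 (fun k => (a : ℂ) * v k + (b : ℂ) * w k)}

theorem rabierFunction_nonneg (v w : Fin n → ℂ) : 0 ≤ rabierFunction v w := by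
  refine Real.sInf_nonneg ?_
  rintro r ⟨a, b, -, rfl⟩
  exact Real.sqrt_nonneg _

theorem rabierFunction_le (v w : Fin n → ℂ) {a b : ℝ} (hab : a ^ 2 + b ^ 2 = 1) :
    rabierFunction v w ≤ Mixed.norm2 (fun k => (a : ℂ) * v k + (b : ℂ) * w k) := by
  refine csInf_le ⟨0, ?_⟩ ⟨a, b, hab, rfl⟩
  rintro r ⟨a, b, -, rfl⟩
  exact Real.sqrt_nonneg _

section Sequences

variable {z v w : ℕ → Fin n → ℂ} {l a b : ℕ → ℝ}

theorem tendsto_mul_sq_norm2_zero {c : MixedCoeff n} {y : ℂ}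
    (hz : Tendsto (fun k => ‖z k‖) atTop atTop)
    (hy : Tendsto (fun k => Mixed.eval c (z k)) atTop (𝓝 y))
    (hv : ∀ k u, fderiv ℝ (fun x => (Mixed.eval c x).re) (z k) u = (∑ i, u i * conj (v k i)).re)
    (hw : ∀ k u, fderiv ℝ (fun x => (Mixed.eval c x).im) (z k) u = (∑ i, u i * conj (w k i)).re)
    (hab : ∀ k, a k ^ 2 + b k ^ 2 = 1)
    (hlin : ∀ k i, (a k : ℂ) * v k i + b k * w k i = l k * z k i) :
    Tendsto (fun k => l k * Mixed.norm2 (z k) ^ 2) atTop (𝓝 0) := by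
  obtain ⟨G, H, hGH⟩ := exists_eval_conjCoords_eq (toMvPolynomial c)
  simp only [eval_toMvPolynomial] at hGH
  have hre (x : Fin n → ℂ) : (Mixed.eval c x).re = eval (realCoords n x) G := by simp [hGH]
  have him (x : Fin n → ℂ) : (Mixed.eval c x).im = eval (realCoords n x) H := by simp [hGH]
  obtain ⟨M, hM⟩ := (Metric.isBounded_range_of_tendsto _ hy).exists_norm_le
  have hnorm : Tendsto (fun k => Mixed.norm2 (z k)) atTop atTop :=
    tendsto_atTop_mono (fun k => norm_le_norm2 (z k)) hz
  simp only [sq_norm2]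
  refine tendsto_mul_sum_sq_zero (G := G) (H := H) (B := M ^ 2) ?_ (fun k => ?_) hab fun k j => ?_
  · simpa only [← sq_norm2, Function.comp_def] using (tendsto_pow_atTop two_ne_zero).comp hnorm
  · rw [← hre, ← him, sq, sq, ← normSq_apply, normSq_eq_norm_sq]
    exact pow_le_pow_left₀ (norm_nonneg _) (hM _ ⟨k, rfl⟩) 2
  · rw [eval_realCoords_pderiv hre (hv k), eval_realCoords_pderiv him (hw k)]
    rcases j with i | i
    · simpa using congrArg re (hlin k i)
    · simpa using congrArg im (hlin k i)

theorem tendsto_one_add_norm_mul_rabierFunction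
    (hz : Tendsto (fun k => ‖z k‖) atTop atTop) (hab : ∀ k, a k ^ 2 + b k ^ 2 = 1)
    (hlin : ∀ k i, (a k : ℂ) * v k i + b k * w k i = l k * z k i)
    (hl : Tendsto (fun k => l k * Mixed.norm2 (z k) ^ 2) atTop (𝓝 0)) :
    Tendsto (fun k => (1 + ‖z k‖) * rabierFunction (v k) (w k)) atTop (𝓝 0) := by
  have hl' : Tendsto (fun k => 2 * |l k * Mixed.norm2 (z k) ^ 2|) atTop (𝓝 0) := by
    simpa using hl.abs.const_mul 2
  refine squeeze_zero' (.of_forall fun k =>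
    mul_nonneg (by positivity) (rabierFunction_nonneg _ _)) ?_ hl'
  filter_upwards [hz.eventually_ge_atTop 1] with k hk
  have hnorm := norm_le_norm2 (z k)
  have hν : rabierFunction (v k) (w k) ≤ |l k| * Mixed.norm2 (z k) := by
    simpa only [hlin, norm2_ofReal_mul] using rabierFunction_le (v k) (w k) (hab k)
  calc (1 + ‖z k‖) * rabierFunction (v k) (w k)
      ≤ 2 * Mixed.norm2 (z k) * (|l k| * Mixed.norm2 (z k)) :=
        mul_le_mul (by linarith) hν (rabierFunction_nonneg _ _) (by linarith)
    _ = 2 * |l k * Mixed.norm2 (z k) ^ 2| := by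
        rw [abs_mul, abs_of_nonneg (sq_nonneg (Mixed.norm2 (z k)))]
        ring

end Sequences

end MixedPolynomials

end AsymptoticCriticalValue

/-- `S(f) ⊆ K_∞(f)`, the set of asymptotic critical values in the sense of
Kurdyka–Orro–Simon, where `ν(x) = inf_{a²+b²=1} ‖a∇g(x) + b∇h(x)‖`. -/
theorem Sset_subset_Kinfty {n : ℕ} (c : MixedCoeff n) (vg vh : (Fin n → ℂ) → (Fin n → ℂ))
    (hg : ∀ (x u : Fin n → ℂ), fderiv ℝ (fun w => (Mixed.eval c w).re) x u
        = (∑ i, u i * (starRingEnd ℂ) (vg x i)).re)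
    (hh : ∀ (x u : Fin n → ℂ), fderiv ℝ (fun w => (Mixed.eval c w).im) x u
        = (∑ i, u i * (starRingEnd ℂ) (vh x i)).re) :
    Mixed.Sset c ⊆ {y : ℂ | ∃ x : ℕ → (Fin n → ℂ),
      Filter.Tendsto (fun l => ‖x l‖) Filter.atTop Filter.atTop ∧
      Filter.Tendsto (fun l => Mixed.eval c (x l)) Filter.atTop (nhds y) ∧
      Filter.Tendsto (fun l => (1 + ‖x l‖) *
          sInf {r : ℝ | ∃ a b : ℝ, a ^ 2 + b ^ 2 = 1 ∧
            r = Mixed.norm2 (fun k => (a : ℂ) * vg (x l) k + (b : ℂ) * vh (x l) k)})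
        Filter.atTop (nhds 0)} := by
  rintro y ⟨z, hz, hz_norm, hzy⟩
  refine ⟨z, hz_norm, hzy, ?_⟩
  choose l a b hab hlin using fun k =>
    AsymptoticCriticalValue.exists_smul_eq_of_mem_milnor (hg (z k)) (hh (z k)) (hz k)
  have hl : Tendsto (fun k => l k * Mixed.norm2 (z k) ^ 2) atTop (nhds 0) :=
    AsymptoticCriticalValue.tendsto_mul_sq_norm2_zero hz_norm hzy (fun k => hg (z k))
      (fun k => hh (z k)) hab hlin
  exact AsymptoticCriticalValue.tendsto_one_add_norm_mul_rabierFunction hz_norm hab hlin hl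
end
end

section
/- (Fibration Theorem.) Let f : ℂⁿ → ℂ be a mixed polynomial and set B := f(Sing f) ∪ S(f). Then the restriction f : ℂⁿ \ f⁻¹(B) → ℂ \ B is a locally trivial C^∞ fibration; that is, for every c ∈ ℂ \ B there exist an open neighbourhood U of c with U ⊆ ℂ \ B and maps Φ : ℂⁿ → ℂ × ℂⁿ and Ψ : ℂ × ℂⁿ → ℂⁿ such that: Φ restricts to a bijection from f⁻¹(U) onto U × f⁻¹({c}) with inverse given by the restriction of Ψ; Φ is C^∞ (over ℝ) on the open set f⁻¹(U); Ψ is C^∞ (over ℝ, in the sense of ContDiffOn) on U × f⁻¹({c}); and the first component of Φ(x) equals f(x) for all x ∈ f⁻¹(U). -/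
open Complex Filter Finset

noncomputable section

/-!
Let `v` be neither a critical value of `f` nor in `S(f)`. Then over a ball around `v` the map `f`
has no critical points, and far from the origin its fibres are transverse to the spheres centred at
the origin. Hence the constant vector fields near `v` lift along `f` to vector fields that are
tangent to all large spheres. Integral curves of such fields cannot escape to infinity, so flowing
for unit time along the lift of `w` carries the fibre over `y` onto the fibre over `y + w`, and this
trivializes `f`. The unit time flow depends smoothly on the initial point and on `w` by the inverse
function theorem in the Banach space of continuous paths, applied to the integral equation.
-/

namespace MilnorFibration

open Set Topology
open scoped ContDiff

section Superposition

universe u v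

variable {K : Type v} [TopologicalSpace K] [CompactSpace K]
variable {E F : Type u} [NormedAddCommGroup E] [NormedSpace ℝ E]
variable [NormedAddCommGroup F] [NormedSpace ℝ F]

variable (K E F) in
/-- The pointwise application `(a, h) ↦ (t ↦ a t (h t))` of continuous families of operators to
continuous maps, as a continuous bilinear map. -/
def pointwiseApply : C(K, E →L[ℝ] F) →L[ℝ] C(K, E) →L[ℝ] C(K, F) :=
  LinearMap.mkContinuous₂
    (LinearMap.mk₂ ℝ (fun (a : C(K, E →L[ℝ] F)) (h : C(K, E)) =>
        (⟨fun t => a t (h t), a.continuous.clm_apply h.continuous⟩ : C(K, F)))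
      (fun _ _ _ => by ext; simp) (fun _ _ _ => by ext; simp)
      (fun _ _ _ => by ext; simp) (fun _ _ _ => by ext; simp))
    1 fun a h => by
      rw [one_mul]
      refine (ContinuousMap.norm_le _ (by positivity)).2 fun t => ?_
      exact (a t).le_of_opNorm_le_of_le (a.norm_coe_le_norm t) (h.norm_coe_le_norm t)

@[simp]
lemma pointwiseApply_apply (a : C(K, E →L[ℝ] F)) (h : C(K, E)) (t : K) :
    pointwiseApply K E F a h t = a t (h t) := rfl

lemma hasFDerivAt_comp_left {g : C(E, F)} {g' : C(E, E →L[ℝ] F)}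
    (hg : ∀ x, HasFDerivAt g (g' x) x) (u : C(K, E)) :
    HasFDerivAt (fun w : C(K, E) => g.comp w) (pointwiseApply K E F (g'.comp u)) u := by
  rw [hasFDerivAt_iff_isLittleO_nhds_zero, Asymptotics.isLittleO_iff]
  intro ε hε
  obtain ⟨δ, hδ, hclose⟩ := Metric.mem_uniformity_dist.1
    ((isCompact_range u.continuous).uniformContinuousAt_of_continuousAt g'
      (fun _ _ => g'.continuous.continuousAt) (Metric.dist_mem_uniformity hε))
  filter_upwards [Metric.ball_mem_nhds (0 : C(K, E)) hδ] with h hh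
  rw [mem_ball_zero_iff] at hh
  refine (ContinuousMap.norm_le _ (by positivity)).2 fun t => ?_
  have mean_value := (convex_ball (u t) δ).norm_image_sub_le_of_norm_hasFDerivWithin_le'
    (φ := g' (u t)) (y := u t + h t) (fun x _ => (hg x).hasFDerivWithinAt)
    (fun x hx => by
      rw [← dist_eq_norm, dist_comm]
      exact (hclose (by rwa [dist_comm]) (mem_range_self t)).le)
    (Metric.mem_ball_self hδ)
    (by simpa [dist_eq_norm] using (h.norm_coe_le_norm t).trans_lt hh)
  rw [add_sub_cancel_left] at mean_value
  exact mean_value.trans (mul_le_mul_of_nonneg_left (h.norm_coe_le_norm t) hε.le)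

lemma contDiff_nat_comp_left (n : ℕ) {g : C(E, F)} (hg : ContDiff ℝ n g) :
    ContDiff ℝ n fun w : C(K, E) => g.comp w := by
  induction n generalizing F with
  | zero => exact contDiff_zero.2 (ContinuousMap.continuous_postcomp g)
  | succ n ih =>
    have hg₁ : ContDiff ℝ 1 g := hg.of_le (by exact_mod_cast Nat.le_add_left 1 n)
    let g' : C(E, E →L[ℝ] F) := ⟨fderiv ℝ g, hg₁.continuous_fderiv one_ne_zero⟩
    have hg' : ContDiff ℝ n g' := hg.fderiv_right (by norm_cast)
    exact_mod_cast contDiff_succ_iff_hasFDerivAt.2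
      ⟨_, (pointwiseApply K E F).contDiff.comp (ih hg'), hasFDerivAt_comp_left fun x =>
        (hg₁.differentiable one_ne_zero x).hasFDerivAt⟩

lemma contDiff_comp_left {g : C(E, F)} (hg : ContDiff ℝ ∞ g) :
    ContDiff ℝ ∞ fun w : C(K, E) => g.comp w :=
  contDiff_infty.2 fun n => contDiff_nat_comp_left n (hg.of_le (by exact_mod_cast le_top))

end Superposition

section Volterra

variable {G : Type*} [NormedAddCommGroup G] [NormedSpace ℝ G]

variable (G) in
/-- The integration operator `u ↦ (t ↦ ∫ s in 0..t, u s)` on continuous paths. -/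
def primitive : C(unitInterval, G) →L[ℝ] C(unitInterval, G) :=
  LinearMap.mkContinuous
    { toFun u := ⟨fun t => ∫ s in (0 : ℝ)..t, IccExtend zero_le_one u s,
        (intervalIntegral.continuous_primitive
          (fun _ _ => u.continuous.Icc_extend'.intervalIntegrable _ _) 0).comp
          continuous_subtype_val⟩
      map_add' u w := by
        ext t
        exact intervalIntegral.integral_add
          (u.continuous.Icc_extend'.intervalIntegrable _ _)
          (w.continuous.Icc_extend'.intervalIntegrable _ _)
      map_smul' r u := by
        ext t
        exact intervalIntegral.integral_smul r _ }
    1 fun u => by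
      rw [one_mul]
      refine (ContinuousMap.norm_le _ (norm_nonneg u)).2 fun t => ?_
      refine (intervalIntegral.norm_integral_le_of_norm_le_const
        fun s _ => u.norm_coe_le_norm _).trans ?_
      rw [sub_zero, abs_of_nonneg t.2.1]
      exact mul_le_of_le_one_right (norm_nonneg _) t.2.2

lemma norm_primitive_le {u : C(unitInterval, G)} {b : ℝ → ℝ} (hb : Continuous b)
    (hu : ∀ s : unitInterval, ‖u s‖ ≤ b s) (t : unitInterval) :
    ‖primitive G u t‖ ≤ ∫ s in (0 : ℝ)..t, b s := by
  refine intervalIntegral.norm_integral_le_of_norm_le t.2.1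
    (.of_forall fun s hs => ?_) (hb.intervalIntegrable _ _)
  have hs' : s ∈ unitInterval := ⟨hs.1.le, hs.2.trans t.2.2⟩
  simpa only [IccExtend_of_mem zero_le_one u hs'] using hu ⟨s, hs'⟩

lemma norm_primitive_comp_pointwiseApply_pow_apply_le (a : C(unitInterval, G →L[ℝ] G)) (k : ℕ)
    (h : C(unitInterval, G)) (t : unitInterval) :
    ‖((primitive G ∘L pointwiseApply unitInterval G G a) ^ k) h t‖ ≤
      (‖a‖ * t) ^ k / k.factorial * ‖h‖ := by
  induction k generalizing t with
  | zero => simpa using h.norm_coe_le_norm t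
  | succ k ih =>
    rw [pow_succ', mul_apply_eq_comp, ContinuousLinearMap.comp_apply]
    calc
      _ ≤ ∫ s in (0 : ℝ)..t, ‖a‖ * ((‖a‖ * s) ^ k / k.factorial * ‖h‖) :=
        norm_primitive_le (by fun_prop)
          (fun s => (a s).le_of_opNorm_le_of_le (a.norm_coe_le_norm s) (ih s)) t
      _ = ∫ s in (0 : ℝ)..t, ‖a‖ ^ (k + 1) / k.factorial * ‖h‖ * s ^ k := by
        congr 1 with s
        ring
      _ = (‖a‖ * t) ^ (k + 1) / (k + 1).factorial * ‖h‖ := by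
        rw [intervalIntegral.integral_const_mul, integral_pow, Nat.factorial_succ]
        push_cast
        field_simp
        rw [mul_pow]
        ring

-- A Volterra operator is quasinilpotent: its iterates decay like `‖a‖ ^ k / k!`.
lemma isUnit_one_sub_primitive_comp_pointwiseApply [CompleteSpace G]
    (a : C(unitInterval, G →L[ℝ] G)) :
    IsUnit (1 - primitive G ∘L pointwiseApply unitInterval G G a) := by
  set T := primitive G ∘L pointwiseApply unitInterval G G a
  have norm_pow_le (k : ℕ) : ‖T ^ k‖ ≤ ‖a‖ ^ k / k.factorial := by
    refine ContinuousLinearMap.opNorm_le_bound _ (by positivity) fun h => ?_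
    refine (ContinuousMap.norm_le _ (by positivity)).2 fun t => ?_
    refine (norm_primitive_comp_pointwiseApply_pow_apply_le a k h t).trans ?_
    have ht : ‖a‖ * t ≤ ‖a‖ := mul_le_of_le_one_right (norm_nonneg a) t.2.2
    have : 0 ≤ ‖a‖ * t := mul_nonneg (norm_nonneg a) t.2.1
    gcongr
  obtain ⟨k, hk⟩ := ((FloorSemiring.tendsto_pow_div_factorial_atTop ‖a‖).eventually
    (gt_mem_nhds one_pos)).exists
  have isUnit_geom : IsUnit (1 - T ^ k) := isUnit_one_sub_of_norm_lt_one
    (R := C(unitInterval, G) →L[ℝ] C(unitInterval, G)) ((norm_pow_le k).trans_lt hk)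
  rw [← mul_neg_geom_sum] at isUnit_geom
  have hcomm : Commute (1 - T) (∑ i ∈ Finset.range k, T ^ i) :=
    .sum_right _ _ _ fun i _ => ((Commute.one_left T).sub_left (.refl T)).pow_right i
  exact (hcomm.isUnit_mul_iff.1 isUnit_geom).1

end Volterra

section IntegralCurve

variable {G : Type*} [NormedAddCommGroup G] [NormedSpace ℝ G]

lemma hasDerivWithinAt_Ici_of_isIntegralCurveOn {γ : ℝ → G} {v : ℝ → G → G} {a b t : ℝ}
    (hγ : IsIntegralCurveOn γ v (Icc a b)) (ht : t ∈ Ico a b) :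
    HasDerivWithinAt γ (v t (γ t)) (Ici t) t :=
  (hγ t (Ico_subset_Icc_self ht)).mono_of_mem_nhdsWithin <|
    mem_of_superset (Icc_mem_nhdsGE ht.2) (Icc_subset_Icc_left ht.1)

lemma eqOn_Icc_of_isIntegralCurveOn {V : G → G} (hV : ContDiff ℝ 1 V) {γ₁ γ₂ : ℝ → G} {a b : ℝ}
    (h₁ : IsIntegralCurveOn γ₁ (fun _ => V) (Icc a b))
    (h₂ : IsIntegralCurveOn γ₂ (fun _ => V) (Icc a b)) (h₀ : γ₁ a = γ₂ a) :
    EqOn γ₁ γ₂ (Icc a b) := by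
  have hcompact : IsCompact (γ₁ '' Icc a b ∪ γ₂ '' Icc a b) :=
    (isCompact_Icc.image_of_continuousOn h₁.continuousOn).union
      (isCompact_Icc.image_of_continuousOn h₂.continuousOn)
  obtain ⟨C, hC⟩ :=
    LocallyLipschitzOn.exists_lipschitzOnWith_of_compact hcompact
      hV.locallyLipschitz.locallyLipschitzOn
  exact ODE_solution_unique_of_mem_Icc_right (fun _ _ => hC)
    h₁.continuousOn (fun _ => hasDerivWithinAt_Ici_of_isIntegralCurveOn h₁)
    (fun _ ht => .inl (mem_image_of_mem _ (Ico_subset_Icc_self ht)))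
    h₂.continuousOn (fun _ => hasDerivWithinAt_Ici_of_isIntegralCurveOn h₂)
    (fun _ ht => .inr (mem_image_of_mem _ (Ico_subset_Icc_self ht))) h₀

lemma isIntegralCurveOn_one_sub {V : G → G} {γ : ℝ → G}
    (hγ : IsIntegralCurveOn γ (fun _ => V) unitInterval) :
    IsIntegralCurveOn (fun t => γ (1 - t)) (fun _ z => -V z) unitInterval := by
  intro t ht
  have hderiv : HasDerivWithinAt (fun t : ℝ => 1 - t) (-1) unitInterval t :=
    ((hasDerivAt_id t).const_sub 1).hasDerivWithinAt
  simpa [Function.comp_def] using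
    (hγ (1 - t) (Icc.mem_iff_one_sub_mem.1 ht)).scomp t hderiv
      fun s hs => Icc.mem_iff_one_sub_mem.1 hs

end IntegralCurve

section TimeOneMap

variable {G : Type*} [NormedAddCommGroup G] [NormedSpace ℝ G]

/-- The map whose fibre over the constant path at `x` consists of the integral curves of `V` that
start at `x`. -/
def integralEquation (V : C(G, G)) (u : C(unitInterval, G)) : C(unitInterval, G) :=
  u - primitive G (V.comp u)

lemma contDiff_integralEquation {V : C(G, G)} (hV : ContDiff ℝ ∞ V) :
    ContDiff ℝ ∞ (integralEquation V) :=
  contDiff_id.sub ((primitive G).contDiff.comp (contDiff_comp_left hV))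

variable [CompleteSpace G]

lemma isIntegralCurveOn_of_integralEquation {V : C(G, G)} {u : C(unitInterval, G)} {x : G}
    (hu : integralEquation V u = .const unitInterval x) :
    IsIntegralCurveOn (IccExtend zero_le_one u) (fun _ => V) unitInterval ∧ u 0 = x := by
  have hu' (t : unitInterval) : u t = x + ∫ s in (0 : ℝ)..t, V (IccExtend zero_le_one u s) :=
    sub_eq_iff_eq_add.1 (DFunLike.congr_fun hu t)
  have hcont : Continuous fun s => V (IccExtend zero_le_one u s) :=
    V.continuous.comp u.continuous.Icc_extend'
  refine ⟨fun t ht => ?_, by simpa using hu' 0⟩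
  have hderiv := (hcont.integral_hasStrictDerivAt 0 t).hasDerivAt.const_add x
  refine hderiv.hasDerivWithinAt.congr_of_mem (fun s hs => ?_) ht
  rw [IccExtend_of_mem zero_le_one u hs, hu']

lemma integralEquation_of_isIntegralCurveOn {V : C(G, G)} {γ : ℝ → G}
    (hγ : IsIntegralCurveOn γ (fun _ => V) unitInterval) :
    integralEquation V ⟨domRestrict unitInterval γ, hγ.continuousOn.domRestrict⟩ =
      .const unitInterval (γ 0) := by
  set u : C(unitInterval, G) := ⟨domRestrict unitInterval γ, hγ.continuousOn.domRestrict⟩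
  ext t
  have hsub : Icc 0 (t : ℝ) ⊆ unitInterval := Icc_subset_Icc_right t.2.2
  have hint : primitive G (V.comp u) t = γ t - γ 0 := by
    refine intervalIntegral.integral_eq_sub_of_hasDerivAt_of_le t.2.1 (hγ.continuousOn.mono hsub)
      (fun s hs => ?_) ((V.comp u).continuous.Icc_extend'.intervalIntegrable _ _)
    have hs' : s ∈ unitInterval := hsub (Ioo_subset_Icc_self hs)
    rw [IccExtend_of_mem zero_le_one _ hs']
    exact (hγ s hs').hasDerivAt (Icc_mem_nhds hs.1 (hs.2.trans_le t.2.2))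
  change γ t - primitive G (V.comp u) t = γ 0
  rw [hint, sub_sub_cancel]

lemma exists_hasFDerivAt_integralEquation {V : C(G, G)} (hV : ContDiff ℝ 1 V)
    (u : C(unitInterval, G)) :
    ∃ e : C(unitInterval, G) ≃L[ℝ] C(unitInterval, G),
      HasFDerivAt (integralEquation V) (e : C(unitInterval, G) →L[ℝ] C(unitInterval, G)) u := by
  let V' : C(G, G →L[ℝ] G) := ⟨fderiv ℝ V, hV.continuous_fderiv one_ne_zero⟩
  obtain ⟨T, hT⟩ := isUnit_one_sub_primitive_comp_pointwiseApply (V'.comp u)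
  refine ⟨.ofUnit T, ?_⟩
  change HasFDerivAt _ (T : C(unitInterval, G) →L[ℝ] C(unitInterval, G)) u
  rw [hT]
  exact (hasFDerivAt_id u).sub ((primitive G).hasFDerivAt.comp u
    (hasFDerivAt_comp_left (g' := V') (fun x => (hV.differentiable one_ne_zero x).hasFDerivAt) u))

theorem contDiff_timeOne {V : G → G} (hV : ContDiff ℝ ∞ V) {γ : G → ℝ → G}
    (hγ : ∀ x, IsIntegralCurveOn (γ x) (fun _ => V) unitInterval) (h₀ : ∀ x, γ x 0 = x) :
    ContDiff ℝ ∞ fun x => γ x 1 := by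
  rw [contDiff_iff_contDiffAt]
  intro x
  have hV₁ : ContDiff ℝ 1 V := hV.of_le (by simp)
  let V₀ : C(G, G) := ⟨V, hV.continuous⟩
  let u : C(unitInterval, G) := ⟨domRestrict unitInterval (γ x), (hγ x).continuousOn.domRestrict⟩
  obtain ⟨e, he⟩ := exists_hasFDerivAt_integralEquation (V := V₀) hV₁ u
  have hN : ContDiffAt ℝ ∞ (integralEquation V₀) u := (contDiff_integralEquation hV).contDiffAt
  have hux : integralEquation V₀ u = .const unitInterval x := by
    rw [integralEquation_of_isIntegralCurveOn (V := V₀) (hγ x), h₀]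
  let solve : C(unitInterval, G) → C(unitInterval, G) := hN.localInverse he (by simp)
  have hsolve : ∀ᶠ y in 𝓝 x,
      integralEquation V₀ (solve (.const unitInterval y)) = .const unitInterval y := by
    have hright := (hN.hasStrictFDerivAt' he (by simp)).eventually_right_inverse
    rw [hux] at hright
    exact ((ContinuousLinearMap.const ℝ unitInterval).continuous.tendsto x).eventually hright
  have hsmooth : ContDiffAt ℝ ∞ (fun y => solve (.const unitInterval y) 1) x := by
    have hconst : ContDiff ℝ ∞ fun y : G => ContinuousMap.const unitInterval y :=
      (ContinuousLinearMap.const ℝ unitInterval : G →L[ℝ] C(unitInterval, G)).contDiff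
    have hinv : ContDiffAt ℝ ∞ solve (.const unitInterval x) :=
      hux ▸ hN.to_localInverse he (by simp)
    exact (ContinuousMap.evalCLM ℝ (1 : unitInterval)).contDiff.contDiffAt.comp x
      (hinv.comp x hconst.contDiffAt)
  refine hsmooth.congr_of_eventuallyEq (hsolve.mono fun y hy => ?_)
  obtain ⟨hcurve, hstart⟩ := isIntegralCurveOn_of_integralEquation hy
  simpa using eqOn_Icc_of_isIntegralCurveOn hV₁ (hγ y) hcurve (by simp [h₀, hstart])
    unitInterval.one_mem

end TimeOneMap

section GlobalExistence

lemma exists_isIntegralCurveOn_of_hasCompactSupport {G : Type*} [NormedAddCommGroup G]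
    [NormedSpace ℝ G] [CompleteSpace G] {V : G → G} (hV : ContDiff ℝ 1 V)
    (hsupp : HasCompactSupport V) (x : G) :
    ∃ γ : ℝ → G, γ 0 = x ∧ IsIntegralCurveOn γ (fun _ => V) unitInterval := by
  obtain ⟨K, hK⟩ := hV.lipschitzWith_of_hasCompactSupport hsupp one_ne_zero
  obtain ⟨L, hL⟩ := hsupp.exists_bound_of_continuous hV.continuous
  have hPL : IsPicardLindelof (fun _ => V) (0 : unitInterval) x L.toNNReal 0 L.toNNReal K :=
    .of_time_independent (fun z _ => (hL z).trans (Real.le_coe_toNNReal L)) hK.lipschitzOnWith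
      (by simp)
  exact hPL.exists_eq_forall_mem_Icc_hasDerivWithinAt₀

variable {E : Type*} [NormedAddCommGroup E] [InnerProductSpace ℝ E]

lemma norm_le_max_of_isIntegralCurveOn {v : ℝ → E → E} {γ : ℝ → E} {a b R : ℝ}
    (hv : ∀ t z, R ≤ ‖z‖ → inner ℝ z (v t z) ≤ 0) (hγ : IsIntegralCurveOn γ v (Icc a b))
    {t : ℝ} (ht : t ∈ Icc a b) : ‖γ t‖ ≤ max ‖γ a‖ R := by
  set M := max ‖γ a‖ R
  have hM : 0 ≤ M := (norm_nonneg _).trans (le_max_left _ _)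
  have barrier (ε : ℝ) (hε : 0 < ε) : ‖γ t‖ ^ 2 ≤ M ^ 2 + ε * (t - a) := by
    refine image_le_of_deriv_right_lt_deriv_boundary (f := fun s => ‖γ s‖ ^ 2)
      (f' := fun s => 2 * inner ℝ (γ s) (v s (γ s))) (B := fun s => M ^ 2 + ε * (s - a))
      (B' := fun _ => ε) (hγ.continuousOn.norm.pow 2)
      (fun s hs => (hasDerivWithinAt_Ici_of_isIntegralCurveOn hγ hs).norm_sq) ?_
      (fun s => by simpa using (((hasDerivAt_id s).sub_const a).const_mul ε).const_add (M ^ 2))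
      (fun s hs heq => ?_) ht
    · simpa using pow_le_pow_left₀ (norm_nonneg _) (le_max_left ‖γ a‖ R) 2
    · have hfar : M ≤ ‖γ s‖ := (pow_le_pow_iff_left₀ hM (norm_nonneg _) two_ne_zero).1 <| by
        rw [heq]
        exact le_add_of_nonneg_right (mul_nonneg hε.le (sub_nonneg.2 hs.1))
      linarith [hv s _ ((le_max_right _ _).trans hfar)]
  have hlim : Tendsto (fun ε => M ^ 2 + ε * (t - a)) (𝓝[>] 0) (𝓝 (M ^ 2)) :=
    ((by fun_prop : Continuous _).tendsto' 0 _ (by simp)).mono_left nhdsWithin_le_nhds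
  exact (pow_le_pow_iff_left₀ (norm_nonneg _) hM two_ne_zero).1
    (ge_of_tendsto hlim (eventually_mem_nhdsWithin.mono barrier))

lemma exists_isIntegralCurveOn_of_inner_nonpos [FiniteDimensional ℝ E] {V : E → E}
    (hV : ContDiff ℝ 1 V) {R : ℝ} (hin : ∀ z, R ≤ ‖z‖ → inner ℝ z (V z) ≤ 0) (x : E) :
    ∃ γ : ℝ → E, γ 0 = x ∧ IsIntegralCurveOn γ (fun _ => V) unitInterval := by
  let χ : ContDiffBump (0 : E) := ⟨max ‖x‖ R + 1, max ‖x‖ R + 2, by positivity, by linarith⟩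
  obtain ⟨γ, hγ₀, hγ⟩ := exists_isIntegralCurveOn_of_hasCompactSupport (V := fun z => χ z • V z)
    (χ.contDiff.smul hV) χ.hasCompactSupport.smul_right x
  refine ⟨γ, hγ₀, fun t ht => ?_⟩
  have hbound : ‖γ t‖ ≤ max ‖γ 0‖ R := by
    refine norm_le_max_of_isIntegralCurveOn (fun _ z hz => ?_) hγ ht
    rw [real_inner_smul_right]
    exact mul_nonpos_of_nonneg_of_nonpos χ.nonneg (hin z hz)
  have hχ : χ (γ t) = 1 := χ.one_of_mem_closedBall <| mem_closedBall_zero_iff.2 <| by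
    rw [hγ₀] at hbound
    exact hbound.trans (le_add_of_nonneg_right zero_le_one)
  simpa only [hχ, one_smul] using hγ t ht

end GlobalExistence

section Trivialization

section Definition

variable {E E' F : Type*} [NormedAddCommGroup E] [NormedSpace ℝ E] [NormedAddCommGroup E']
  [NormedSpace ℝ E'] [NormedAddCommGroup F] [NormedSpace ℝ F]

/-- `f` is a trivial `C^∞` fibration over `U` with fibre `f ⁻¹' {v}`: `Φ` is a trivialization of
`f ⁻¹' U` and `Ψ` is its inverse, both encoded as total maps that only matter on `f ⁻¹' U` and
`U ×ˢ f ⁻¹' {v}`. -/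
def TriviallyFibredOver (f : E → F) (U : Set F) (v : F) : Prop :=
  ∃ (Φ : E → F × E) (Ψ : F × E → E),
    (∀ x ∈ f ⁻¹' U, Φ x ∈ U ×ˢ (f ⁻¹' {v}) ∧ Ψ (Φ x) = x ∧ (Φ x).1 = f x) ∧
    (∀ p ∈ U ×ˢ (f ⁻¹' {v}), Ψ p ∈ f ⁻¹' U ∧ Φ (Ψ p) = p) ∧
    ContDiffOn ℝ ∞ Φ (f ⁻¹' U) ∧
    ContDiffOn ℝ ∞ Ψ (U ×ˢ (f ⁻¹' {v}))

lemma TriviallyFibredOver.comp_continuousLinearEquiv {f : E → F} {U : Set F} {v : F}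
    (h : TriviallyFibredOver f U v) (L : E' ≃L[ℝ] E) : TriviallyFibredOver (f ∘ L) U v := by
  obtain ⟨Φ, Ψ, hΦ, hΨ, hΦs, hΨs⟩ := h
  refine ⟨fun x => ((Φ (L x)).1, L.symm (Φ (L x)).2), fun p => L.symm (Ψ (p.1, L p.2)),
    fun x hx => ?_, fun p hp => ?_, ?_, ?_⟩
  · obtain ⟨hmem, hinv, hfst⟩ := hΦ (L x) hx
    exact ⟨⟨hmem.1, by simpa using hmem.2⟩, by simp [hinv], hfst⟩
  · obtain ⟨hmem, hinv⟩ := hΨ (p.1, L p.2) hp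
    exact ⟨by simpa using hmem, by simp [hinv]⟩
  · have hΦL : ContDiffOn ℝ ∞ (fun x => Φ (L x)) (f ∘ L ⁻¹' U) :=
      hΦs.comp L.contDiff.contDiffOn fun _ hx => hx
    exact hΦL.fst.prodMk (L.symm.contDiff.comp_contDiffOn hΦL.snd)
  · exact L.symm.contDiff.comp_contDiffOn
      (hΨs.comp (contDiff_fst.prodMk (L.contDiff.comp contDiff_snd)).contDiffOn fun _ hp => hp)

end Definition

variable {E F : Type*} [NormedAddCommGroup E] [InnerProductSpace ℝ E] [NormedAddCommGroup F]
  [NormedSpace ℝ F]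

/-- A smooth lift `X` to `E` of the vector fields `χ • w` on `F`, with `w` constant, that is tangent
to all sufficiently large spheres centred at the origin. -/
structure ControlledLift (f : E → F) (χ : F → ℝ) (X : E → F →L[ℝ] E) : Prop where
  contDiff : ContDiff ℝ ∞ X
  fderiv_apply : ∀ z w, fderiv ℝ f z (X z w) = χ (f z) • w
  exists_inner_eq_zero : ∃ R, ∀ z, R ≤ ‖z‖ → ∀ w, inner ℝ z (X z w) = 0

namespace ControlledLift

variable {f : E → F} {χ : F → ℝ} {X : E → F →L[ℝ] E}

lemma contDiff_one_apply (hX : ControlledLift f χ X) (w : F) : ContDiff ℝ 1 fun z => X z w :=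
  (hX.contDiff.of_le (by simp)).clm_apply contDiff_const

variable [FiniteDimensional ℝ E]

lemma exists_isIntegralCurveOn (hX : ControlledLift f χ X) (p : E × F) :
    ∃ γ : ℝ → E, γ 0 = p.1 ∧ IsIntegralCurveOn γ (fun _ z => X z p.2) unitInterval :=
  have ⟨_, hR⟩ := hX.exists_inner_eq_zero
  exists_isIntegralCurveOn_of_inner_nonpos (hX.contDiff_one_apply p.2)
    (fun z hz => (hR z hz p.2).le) p.1

/-- The integral curve of `X · w` that starts at `x`, for `p = (x, w)`. -/
def curve (hX : ControlledLift f χ X) (p : E × F) : ℝ → E :=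
  (hX.exists_isIntegralCurveOn p).choose

lemma curve_zero (hX : ControlledLift f χ X) (p : E × F) : hX.curve p 0 = p.1 :=
  (hX.exists_isIntegralCurveOn p).choose_spec.1

lemma isIntegralCurveOn_curve (hX : ControlledLift f χ X) (p : E × F) :
    IsIntegralCurveOn (hX.curve p) (fun _ z => X z p.2) unitInterval :=
  (hX.exists_isIntegralCurveOn p).choose_spec.2

/-- The point `transport (x, w)` reached from `x` after flowing along `X · w` for unit time; it lies
over `f x + w` as long as `χ = 1` along the way. -/
def transport (hX : ControlledLift f χ X) (p : E × F) : E := hX.curve p 1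

lemma transport_transport_neg (hX : ControlledLift f χ X) (x : E) (w : F) :
    hX.transport (hX.transport (x, w), -w) = x := by
  have hreverse := isIntegralCurveOn_one_sub (hX.isIntegralCurveOn_curve (x, w))
  simp only [← map_neg] at hreverse
  have hunique := eqOn_Icc_of_isIntegralCurveOn (hX.contDiff_one_apply (-w))
    (hX.isIntegralCurveOn_curve (hX.transport (x, w), -w)) hreverse
    (by rw [curve_zero, sub_zero, transport]) unitInterval.one_mem
  simpa only [transport, sub_self, curve_zero] using hunique

lemma apply_transport (hX : ControlledLift f χ X) (hf : Differentiable ℝ f) (hχ : ContDiff ℝ 1 χ)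
    {U : Set F} (hU : Convex ℝ U) (hχU : ∀ y ∈ U, χ y = 1) {x : E} {w : F} (hx : f x ∈ U)
    (hxw : f x + w ∈ U) : f (hX.transport (x, w)) = f x + w := by
  have hlift : IsIntegralCurveOn (f ∘ hX.curve (x, w)) (fun _ y => χ y • w) unitInterval := by
    intro t ht
    have hcomp := (hf _).hasFDerivAt.comp_hasDerivWithinAt t
      (hX.isIntegralCurveOn_curve (x, w) t ht)
    rwa [hX.fderiv_apply] at hcomp
  have hline : IsIntegralCurveOn (fun t : ℝ => f x + t • w) (fun _ y => χ y • w) unitInterval := by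
    intro t ht
    simpa only [hχU _ (hU.add_smul_mem hx hxw ht), id_eq] using
      (((hasDerivAt_id t).smul_const w).const_add (f x)).hasDerivWithinAt
  have hunique := eqOn_Icc_of_isIntegralCurveOn (hχ.smul contDiff_const) hlift hline
    (by simp [curve_zero]) unitInterval.one_mem
  simpa [transport] using hunique

variable [CompleteSpace F]

lemma contDiff_transport (hX : ControlledLift f χ X) : ContDiff ℝ ∞ hX.transport := by
  have hfield : ContDiff ℝ ∞ fun p : E × F => (X p.1 p.2, (0 : F)) :=
    ((hX.contDiff.comp contDiff_fst).clm_apply contDiff_snd).prodMk contDiff_const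
  exact (contDiff_timeOne hfield (γ := fun p t => (hX.curve p t, p.2))
    (fun p t ht => (hX.isIntegralCurveOn_curve p t ht).prodMk (hasDerivWithinAt_const _ _ _))
    fun p => Prod.ext (hX.curve_zero p) rfl).fst

theorem triviallyFibredOver (hX : ControlledLift f χ X) (hf : ContDiff ℝ ∞ f)
    (hχ : ContDiff ℝ 1 χ) {U : Set F} (hU : Convex ℝ U) (hχU : ∀ y ∈ U, χ y = 1) {v : F}
    (hv : v ∈ U) : TriviallyFibredOver f U v := by
  have apply_transport {x : E} {w : F} := hX.apply_transport (x := x) (w := w)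
    (hf.differentiable (by simp)) hχ hU hχU
  have apply_transport_sub (x : E) (hx : f x ∈ U) : f (hX.transport (x, v - f x)) = v := by
    rw [apply_transport hx (by rwa [add_sub_cancel]), add_sub_cancel]
  have apply_transport_fibre (y : F) (x : E) (hy : y ∈ U) (hx : f x = v) :
      f (hX.transport (x, y - v)) = y := by
    subst hx
    rw [apply_transport hv (by rwa [add_sub_cancel]), add_sub_cancel]
  refine ⟨fun x => (f x, hX.transport (x, v - f x)), fun p => hX.transport (p.2, p.1 - v),
    fun x hx => ⟨⟨hx, apply_transport_sub x hx⟩, ?_, rfl⟩, fun ⟨y, x⟩ ⟨hy, hx⟩ => ?_, ?_, ?_⟩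
  · simpa using hX.transport_transport_neg x (v - f x)
  · have hfy := apply_transport_fibre y x hy hx
    refine ⟨by simpa [hfy] using hy, Prod.ext hfy ?_⟩
    simpa [hfy] using hX.transport_transport_neg x (y - v)
  · exact (hf.prodMk (hX.contDiff_transport.comp
      (contDiff_id.prodMk (contDiff_const.sub hf)))).contDiffOn
  · exact (hX.contDiff_transport.comp
      (contDiff_snd.prodMk (contDiff_fst.sub contDiff_const))).contDiffOn

end ControlledLift

end Trivialization

section WeightedRightInverse

open ContinuousLinearMap InnerProductSpace
open scoped InnerProduct

variable {E F : Type*} [NormedAddCommGroup E] [InnerProductSpace ℝ E] [NormedAddCommGroup F]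
  [InnerProductSpace ℝ F]

/-- The symmetric operator `s + ‖z‖² - ⟪z, ·⟫ z`. For `s = 0` it maps into the orthogonal complement
of `z`, the tangent space at `z` of the sphere through `z`; for `s > 0` it is positive definite. -/
def tangentialOperator (s : ℝ) (z : E) : E →L[ℝ] E :=
  (s + ‖z‖ ^ 2) • .id ℝ E - rankOne ℝ z z

lemma tangentialOperator_apply (s : ℝ) (z a : E) :
    tangentialOperator s z a = (s + ‖z‖ ^ 2) • a - inner ℝ z a • z := rfl

lemma inner_tangentialOperator_zero (z a : E) : inner ℝ z (tangentialOperator 0 z a) = 0 := by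
  rw [tangentialOperator_apply, inner_sub_right, real_inner_smul_right, real_inner_smul_right,
    real_inner_self_eq_norm_sq]
  ring

lemma inner_tangentialOperator_self (s : ℝ) (z a : E) :
    inner ℝ a (tangentialOperator s z a) =
      s * ‖a‖ ^ 2 + ((‖z‖ * ‖a‖) ^ 2 - |inner ℝ z a| ^ 2) := by
  rw [tangentialOperator_apply, inner_sub_right, real_inner_smul_right, real_inner_smul_right,
    real_inner_self_eq_norm_sq, real_inner_comm, sq_abs]
  ring

lemma inner_tangentialOperator_self_pos {s : ℝ} (hs : 0 < s) (z : E) {a : E} (ha : a ≠ 0) :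
    0 < inner ℝ a (tangentialOperator s z a) := by
  rw [inner_tangentialOperator_self]
  have hcauchy : |inner ℝ z a| ^ 2 ≤ (‖z‖ * ‖a‖) ^ 2 :=
    pow_le_pow_left₀ (abs_nonneg _) (abs_real_inner_le_norm z a) 2
  have : 0 < ‖a‖ := norm_pos_iff.2 ha
  have : 0 < s * ‖a‖ ^ 2 := by positivity
  linarith

lemma inner_tangentialOperator_zero_self_pos {z a : E} (hz : z ≠ 0) (ha : ∀ l : ℝ, l • z ≠ a) :
    0 < inner ℝ a (tangentialOperator 0 z a) := by
  rw [inner_tangentialOperator_self, zero_mul, zero_add, sub_pos]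
  have ha₀ : a ≠ 0 := fun h => ha 0 (by rw [zero_smul, h])
  refine pow_lt_pow_left₀ ((abs_real_inner_le_norm z a).lt_of_ne fun heq => ?_) (abs_nonneg _)
    two_ne_zero
  obtain ⟨l, -, hl⟩ := (norm_inner_eq_norm_iff (𝕜 := ℝ) hz ha₀).1 heq
  exact ha l hl.symm

lemma contDiff_tangentialOperator {β : E → ℝ} {n : WithTop ℕ∞} (hβ : ContDiff ℝ n β) :
    ContDiff ℝ n fun z => tangentialOperator (β z) z :=
  ((hβ.add (contDiff_norm_sq ℝ)).smul contDiff_const).sub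
    (((innerSL ℝ).contDiff).smulRight contDiff_id)

variable [CompleteSpace E] [CompleteSpace F]

lemma contDiff_adjoint {n : WithTop ℕ∞} :
    ContDiff ℝ n fun T : E →L[ℝ] F => T† :=
  IsBoundedLinearMap.contDiff ⟨⟨map_add _, fun c T => adjoint.map_smulₛₗ c T⟩, 1, one_pos,
    fun T => by rw [one_mul, LinearIsometryEquiv.norm_map]⟩

/-- A right inverse of `T` with values in the range of `P`, provided that `T ∘ P ∘ T†` is
invertible. For `P = 1` it is the Moore–Penrose inverse. -/
def weightedRightInverse (P : E →L[ℝ] E) (T : E →L[ℝ] F) : F →L[ℝ] E :=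
  P ∘L T† ∘L (T ∘L P ∘L T†).inverse

lemma apply_weightedRightInverse {P : E →L[ℝ] E} {T : E →L[ℝ] F}
    (h : (T ∘L P ∘L T†).IsInvertible) (w : F) :
    T (weightedRightInverse P T w) = w :=
  h.self_apply_inverse w

lemma contDiffAt_weightedRightInverse {G : Type*} [NormedAddCommGroup G] [NormedSpace ℝ G]
    {P : G → E →L[ℝ] E} {T : G → E →L[ℝ] F} {n : WithTop ℕ∞} {x : G} (hP : ContDiffAt ℝ n P x)
    (hT : ContDiffAt ℝ n T x) (h : (T x ∘L P x ∘L (T x)†).IsInvertible) :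
    ContDiffAt ℝ n (fun y => weightedRightInverse (P y) (T y)) x := by
  have hadj : ContDiffAt ℝ n (fun y => (T y)†) x := contDiff_adjoint.contDiffAt.comp x hT
  have hinv : ContDiffAt ℝ n (fun y => (T y ∘L P y ∘L (T y)†).inverse) x :=
    ContDiffAt.comp (g := inverse) x h.contDiffAt_map_inverse (hT.clm_comp (hP.clm_comp hadj))
  exact hP.clm_comp (hadj.clm_comp hinv)

end WeightedRightInverse

section Surjectivity

open ContinuousLinearMap
open scoped InnerProduct

variable {E F : Type*} [NormedAddCommGroup E] [InnerProductSpace ℝ E] [CompleteSpace E]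
  [NormedAddCommGroup F] [InnerProductSpace ℝ F] [FiniteDimensional ℝ F] {T : E →L[ℝ] F}

lemma isInvertible_comp_comp_adjoint {P : E →L[ℝ] E}
    (h : ∀ m ≠ 0, 0 < inner ℝ ((T†) m) (P ((T†) m))) :
    (T ∘L P ∘L T†).IsInvertible := by
  have hinj : Function.Injective (T ∘L P ∘L T†) := by
    refine (injective_iff_map_eq_zero _).2 fun m hm => ?_
    by_contra hm₀
    refine (h m hm₀).ne' ?_
    rw [adjoint_inner_left, show T (P ((T†) m)) = 0 from hm, inner_zero_right]
  exact ⟨.ofBijective _ (LinearMap.ker_eq_bot.2 hinj)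
    (LinearMap.range_eq_top.2 (LinearMap.injective_iff_surjective.1 hinj)), rfl⟩

lemma surjective_iff_forall_adjoint_ne_zero :
    Function.Surjective T ↔ ∀ m ≠ 0, (T†) m ≠ 0 := by
  calc
    _ ↔ T.range = ⊤ := LinearMap.range_eq_top.symm
    _ ↔ T†.ker = ⊥ := by rw [← orthogonal_range, Submodule.orthogonal_eq_bot_iff]
    _ ↔ _ := by simp only [LinearMap.ker_eq_bot', ne_eq, not_imp_not, coe_coe]

lemma surjective_iff_isInvertible_comp_adjoint :
    Function.Surjective T ↔ (T ∘L T†).IsInvertible := by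
  refine ⟨fun hsurj => ?_, fun hinv => hinv.surjective.of_comp (f := T)⟩
  exact isInvertible_comp_comp_adjoint (P := .id ℝ E) fun m hm =>
    real_inner_self_pos.2 (surjective_iff_forall_adjoint_ne_zero.1 hsurj m hm)

end Surjectivity

section ChangeOfCoordinates

variable {E E' F : Type*} [NormedAddCommGroup E] [NormedSpace ℝ E] [NormedAddCommGroup E']
  [NormedSpace ℝ E'] [NormedAddCommGroup F] [NormedSpace ℝ F]

lemma tendsto_norm_continuousLinearEquiv_atTop {ι : Type*} {l : Filter ι} (L : E' ≃L[ℝ] E)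
    {z : ι → E'} :
    Tendsto (fun k => ‖L (z k)‖) l atTop ↔ Tendsto (fun k => ‖z k‖) l atTop := by
  have hcobounded : comap L (Bornology.cobounded E) = Bornology.cobounded E' :=
    L.lipschitz.comap_cobounded_le.antisymm L.antilipschitz.tendsto_cobounded.le_comap
  rw [tendsto_norm_atTop_iff_cobounded, tendsto_norm_atTop_iff_cobounded, ← hcobounded,
    tendsto_comap_iff]
  rfl

/-- The points at which the derivative of `f` is not surjective. -/
def criticalSet (f : E → F) : Set E := {z | ¬ Function.Surjective (fderiv ℝ f z)}

lemma criticalSet_comp_continuousLinearEquiv (f : E → F) (L : E' ≃L[ℝ] E) :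
    criticalSet (f ∘ L) = L ⁻¹' criticalSet f := by
  ext z
  refine not_congr ?_
  rw [L.comp_right_fderiv]
  exact EquivLike.surjective_comp L _

end ChangeOfCoordinates

section Fibration

open ContinuousLinearMap
open scoped InnerProduct

variable {E F : Type*} [NormedAddCommGroup E] [InnerProductSpace ℝ E] [NormedAddCommGroup F]
  [InnerProductSpace ℝ F]

/-- The Milnor set: the points `z` at which the restriction of `f` to the sphere through `z` centred
at the origin is not a submersion, that is, some nonzero `m` is mapped to a multiple of the normal
`z` by the adjoint derivative. -/
def milnorSet [CompleteSpace E] [CompleteSpace F] (f : E → F) : Set E :=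
  {z | ∃ l : ℝ, ∃ m ≠ 0, l • z = ((fderiv ℝ f z)†) m}

/-- The limits of `f` along sequences in the Milnor set that tend to infinity, called `S(f)` in the
paper. -/
def asymptoticValues [CompleteSpace E] [CompleteSpace F] (f : E → F) : Set F :=
  {v | ∃ z : ℕ → E, (∀ k, z k ∈ milnorSet f) ∧ Tendsto (fun k => ‖z k‖) atTop atTop ∧
    Tendsto (fun k => f (z k)) atTop (𝓝 v)}

/-- The set outside which the fibration theorem asserts local triviality, called `B` in the
paper. -/
def irregularValues [CompleteSpace E] [CompleteSpace F] (f : E → F) : Set F :=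
  f '' criticalSet f ∪ asymptoticValues f

variable [FiniteDimensional ℝ F] {f : E → F} {v : F}

lemma isClosed_criticalSet [CompleteSpace E] (hf : ContDiff ℝ 1 f) : IsClosed (criticalSet f) := by
  have hcrit : criticalSet f =
      (fun z => fderiv ℝ f z ∘L (fderiv ℝ f z)†) ⁻¹' (range ((↑) : (F ≃L[ℝ] F) → F →L[ℝ] F))ᶜ :=
    ext fun _ => not_congr surjective_iff_isInvertible_comp_adjoint
  rw [hcrit]
  have hfderiv : Continuous (fderiv ℝ f) := hf.continuous_fderiv one_ne_zero
  exact (ContinuousLinearEquiv.isOpen.isClosed_compl).preimage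
    (hfderiv.clm_comp (adjoint.continuous.comp hfderiv))

lemma eventually_notMem_milnorSet [CompleteSpace E] (hv : v ∉ asymptoticValues f) :
    ∀ᶠ z in comap norm atTop ⊓ comap f (𝓝 v), z ∉ milnorSet f := by
  by_contra hfreq
  obtain ⟨z, hz, hmem⟩ := exists_seq_forall_of_frequently hfreq
  rw [tendsto_inf, tendsto_comap_iff, tendsto_comap_iff] at hz
  exact hv ⟨z, hmem, hz⟩

variable [FiniteDimensional ℝ E]

lemma eventually_notMem_criticalSet_inter_closedBall (hf : ContDiff ℝ 1 f)
    (hv : v ∉ f '' criticalSet f) (R : ℝ) :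
    ∀ᶠ y in 𝓝 v, y ∉ f '' (criticalSet f ∩ Metric.closedBall 0 R) := by
  have hcompact : IsCompact (criticalSet f ∩ Metric.closedBall 0 R) :=
    (isCompact_closedBall 0 R).inter_left (isClosed_criticalSet hf)
  exact (hcompact.image hf.continuous).isClosed.compl_mem_nhds
    fun h => hv (image_mono inter_subset_left h)

lemma criticalSet_subset_milnorSet : criticalSet f ⊆ milnorSet f := by
  intro z hz
  obtain ⟨m, hm, hadj⟩ : ∃ m ≠ 0, ((fderiv ℝ f z)†) m = 0 := by
    simpa using mt surjective_iff_forall_adjoint_ne_zero.2 hz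
  exact ⟨0, m, hm, by rw [zero_smul, hadj]⟩

lemma exists_regular_ball (hf : ContDiff ℝ 1 f) (hv : v ∉ irregularValues f) :
    ∃ R : ℝ, ∃ δ > 0, ∀ z, f z ∈ Metric.ball v δ →
      z ∉ criticalSet f ∧ (R ≤ ‖z‖ → z ∉ milnorSet f) := by
  rw [irregularValues, mem_union, not_or] at hv
  obtain ⟨⟨R, δ₁⟩, ⟨-, hδ₁⟩, hfar⟩ := (((atTop_basis (α := ℝ)).comap norm).inf
    (Metric.nhds_basis_ball.comap f)).eventually_iff.1 (eventually_notMem_milnorSet hv.2)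
  obtain ⟨δ₂, hδ₂, hnear⟩ := Metric.nhds_basis_ball.eventually_iff.1
    (eventually_notMem_criticalSet_inter_closedBall hf hv.1 R)
  refine ⟨R, min δ₁ δ₂, lt_min hδ₁ hδ₂, fun z hz => ?_⟩
  have hfar' (hR : R ≤ ‖z‖) : z ∉ milnorSet f :=
    hfar ⟨hR, Metric.ball_subset_ball (min_le_left _ _) hz⟩
  refine ⟨fun hcrit => ?_, hfar'⟩
  rcases le_total R ‖z‖ with hR | hR
  · exact hfar' hR (criticalSet_subset_milnorSet hcrit)
  · exact hnear (Metric.ball_subset_ball (min_le_right _ _) hz)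
      ⟨z, ⟨hcrit, mem_closedBall_zero_iff.2 hR⟩, rfl⟩

lemma exists_controlledLift (hf : ContDiff ℝ ∞ f) {χ : F → ℝ} (hχ : ContDiff ℝ ∞ χ) {R : ℝ}
    (hcrit : ∀ z, f z ∈ tsupport χ → z ∉ criticalSet f)
    (hmilnor : ∀ z, f z ∈ tsupport χ → R ≤ ‖z‖ → z ∉ milnorSet f) :
    ∃ X, ControlledLift f χ X := by
  let β : ContDiffBump (0 : E) := ⟨|R| + 1, |R| + 2, by positivity, by linarith⟩
  have β_eq_zero {z : E} (hz : |R| + 2 ≤ ‖z‖) : β z = 0 :=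
    β.zero_of_le_dist (by rwa [dist_zero_right])
  let P (z : E) : E →L[ℝ] E := tangentialOperator (β z) z
  have hinv (z : E) (hz : f z ∈ tsupport χ) :
      (fderiv ℝ f z ∘L P z ∘L (fderiv ℝ f z)†).IsInvertible := by
    refine isInvertible_comp_comp_adjoint fun m hm => ?_
    rcases lt_or_ge ‖z‖ (|R| + 2) with hnear | hfar
    · have hβ : 0 < β z := β.pos_of_mem_ball (mem_ball_zero_iff.2 hnear)
      exact inner_tangentialOperator_self_pos hβ z
        (surjective_iff_forall_adjoint_ne_zero.1 (not_not.1 (hcrit z hz)) m hm)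
    · have hz₀ : z ≠ 0 := norm_pos_iff.1 (by linarith [abs_nonneg R])
      simp only [P, β_eq_zero hfar]
      exact inner_tangentialOperator_zero_self_pos hz₀ fun l hl =>
        hmilnor z hz (by linarith [le_abs_self R]) ⟨l, m, hm, hl⟩
  refine ⟨fun z => χ (f z) • weightedRightInverse (P z) (fderiv ℝ f z), ?_, fun z w => ?_,
    |R| + 2, fun z hz w => ?_⟩
  · refine (contMDiff_of_tsupport fun z hz => ContDiffAt.contMDiffAt ?_).contDiff
    have hzχ : f z ∈ tsupport χ :=
      tsupport_comp_subset_preimage χ hf.continuous (tsupport_smul_subset_left _ _ hz)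
    exact (hχ.comp hf).contDiffAt.smul (contDiffAt_weightedRightInverse
      (contDiff_tangentialOperator β.contDiff).contDiffAt
      (hf.fderiv_right (by simp)).contDiffAt (hinv z hzχ))
  · rw [smul_apply, map_smul]
    rcases eq_or_ne (χ (f z)) 0 with h₀ | h₀
    · rw [h₀, zero_smul, zero_smul]
    · rw [apply_weightedRightInverse (hinv z (subset_tsupport χ h₀))]
  · rw [smul_apply, real_inner_smul_right]
    simp only [P, β_eq_zero hz, weightedRightInverse, comp_apply, inner_tangentialOperator_zero,
      mul_zero]

end Fibration

end MilnorFibration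

namespace Mixed

open MilnorFibration Topology
open scoped ContDiff InnerProduct ComplexConjugate

section Derivative

variable {n : ℕ}

lemma contDiff_eval (c : MixedCoeff n) : ContDiff ℝ ∞ (eval c) := by
  have hconj (i : Fin n) : ContDiff ℝ ∞ fun z : Fin n → ℂ => conj (z i) :=
    conjCLE.contDiff.comp (contDiff_apply ℝ ℂ i)
  exact ContDiff.sum fun p _ => (contDiff_const.mul
    (contDiff_prod fun i _ => (contDiff_apply ℝ ℂ i).pow _)).mul
      (contDiff_prod fun i _ => (hconj i).pow _)

lemma hasFDerivAt_prod_pow {ι : Type*} [Fintype ι] [DecidableEq ι] (p : ι → ℕ) (z : ι → ℂ) :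
    HasFDerivAt (fun z : ι → ℂ => ∏ j, z j ^ p j)
      (∑ i, ((p i : ℂ) * ∏ j, z j ^ (p j - if j = i then 1 else 0)) •
        (ContinuousLinearMap.proj i : (ι → ℂ) →L[ℝ] ℂ)) z := by
  have hpow (j : ι) : HasFDerivAt (fun z : ι → ℂ => z j ^ p j)
      ((p j * z j ^ (p j - 1)) • (ContinuousLinearMap.proj j : (ι → ℂ) →L[ℝ] ℂ)) z := by
    simpa using (ContinuousLinearMap.proj j : (ι → ℂ) →L[ℝ] ℂ).hasFDerivAt (x := z) |>.pow (p j)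
  refine (HasFDerivAt.finsetProd fun j _ => hpow j).congr_fderiv
    (Finset.sum_congr rfl fun i hi => ?_)
  have herase : ∏ j ∈ univ.erase i, z j ^ (p j - if j = i then 1 else 0) =
      ∏ j ∈ univ.erase i, z j ^ p j :=
    Finset.prod_congr rfl fun j hj => by rw [if_neg (ne_of_mem_erase hj), Nat.sub_zero]
  rw [← mul_prod_erase univ _ hi, herase, if_pos rfl, smul_smul]
  congr 1
  ring

lemma fderiv_eval_apply (c : MixedCoeff n) (z h : Fin n → ℂ) :
    fderiv ℝ (eval c) z h = ∑ i, (dz c i z * h i + dzbar c i z * conj (h i)) := by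
  have hconj (p : Fin n → ℕ) : HasFDerivAt (fun z : Fin n → ℂ => ∏ i, conj (z i) ^ p i) _ z :=
    HasFDerivAt.comp (g := fun z : Fin n → ℂ => ∏ j, z j ^ p j) z
      (hasFDerivAt_prod_pow p (star z)) (starL' ℝ).hasFDerivAt
  have heval : HasFDerivAt (eval c) _ z := HasFDerivAt.fun_sum (u := c.support) fun p _ =>
    ((hasFDerivAt_prod_pow p.1 z).const_mul (c p)).mul (hconj p.2)
  rw [heval.fderiv, _root_.sum_apply, Finset.sum_add_distrib (f := fun i => dz c i z * h i)]
  simp only [dz, dzbar, Finsupp.sum, Finset.sum_mul]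
  rw [Finset.sum_comm (s := univ), Finset.sum_comm (s := univ)]
  refine Eq.trans ?_ Finset.sum_add_distrib
  refine Finset.sum_congr rfl fun p _ => ?_
  simp only [Pi.star_apply, RCLike.star_def, add_apply, smul_apply,
    ContinuousLinearMap.comp_apply, ContinuousLinearEquiv.coe_coe,
    starL'_apply, _root_.sum_apply, ContinuousLinearMap.proj_apply, smul_eq_mul, Finset.mul_sum]
  rw [add_comm]
  congr 1 <;> exact Finset.sum_congr rfl fun i _ => by ring

end Derivative

section EuclideanCoordinates

variable {n : ℕ}

/-- The identification of Euclidean `ℂⁿ`, a real inner product space, with the space `Fin n → ℂ` on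
which mixed polynomials are defined. -/
def ofEuclidean (n : ℕ) : EuclideanSpace ℂ (Fin n) ≃L[ℝ] (Fin n → ℂ) :=
  PiLp.continuousLinearEquiv 2 ℝ fun _ => ℂ

lemma ofEuclidean_adjoint_fderiv (c : MixedCoeff n) (z : EuclideanSpace ℂ (Fin n))
    (m : ℂ) (i : Fin n) :
    ofEuclidean n (((fderiv ℝ (eval c ∘ ofEuclidean n) z)†) m) i =
      m * conj (dz c i (ofEuclidean n z)) + conj m * dzbar c i (ofEuclidean n z) := by
  have hfderiv (a : EuclideanSpace ℂ (Fin n)) :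
      fderiv ℝ (eval c ∘ ofEuclidean n) z a = fderiv ℝ (eval c) (ofEuclidean n z) a := by
    rw [(ofEuclidean n).comp_right_fderiv]
    rfl
  suffices ((fderiv ℝ (eval c ∘ ofEuclidean n) z)†) m = WithLp.toLp 2 fun i =>
      m * conj (dz c i (ofEuclidean n z)) + conj m * dzbar c i (ofEuclidean n z) by
    rw [this]
    rfl
  refine ext_inner_right ℝ fun a => ?_
  rw [ContinuousLinearMap.adjoint_inner_left, hfderiv, fderiv_eval_apply, inner_sum,
    PiLp.inner_apply]
  refine Finset.sum_congr rfl fun i _ => ?_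
  simp only [Complex.inner, mul_re, add_re, conj_re, conj_im, mul_neg, sub_neg_eq_add, add_im,
    mul_im, map_add, map_mul, RingHomCompTriple.comp_apply, RingHom.id_apply, neg_mul]
  ring

lemma mem_milnorSet_comp_ofEuclidean (c : MixedCoeff n) {z : EuclideanSpace ℂ (Fin n)} :
    z ∈ milnorSet (eval c ∘ ofEuclidean n) ↔ ofEuclidean n z ∈ Milnor c := by
  refine exists_congr fun l => exists_congr fun m => and_congr_right fun _ => ?_
  rw [← (ofEuclidean n).injective.eq_iff, map_smul, funext_iff]
  simp only [ofEuclidean_adjoint_fderiv, Pi.smul_apply, real_smul]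

lemma asymptoticValues_comp_ofEuclidean (c : MixedCoeff n) :
    asymptoticValues (eval c ∘ ofEuclidean n) = Sset c := by
  ext v
  constructor
  · rintro ⟨z, hz, hnorm, hlim⟩
    exact ⟨ofEuclidean n ∘ z, fun k => (mem_milnorSet_comp_ofEuclidean c).1 (hz k),
      (tendsto_norm_continuousLinearEquiv_atTop _).2 hnorm, hlim⟩
  · rintro ⟨z, hz, hnorm, hlim⟩
    obtain ⟨z, rfl⟩ := (ofEuclidean n).surjective.comp_left z
    exact ⟨z, fun k => (mem_milnorSet_comp_ofEuclidean c).2 (hz k),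
      (tendsto_norm_continuousLinearEquiv_atTop _).1 hnorm, hlim⟩

lemma image_criticalSet_comp_ofEuclidean (c : MixedCoeff n) :
    (eval c ∘ ofEuclidean n) '' criticalSet (eval c ∘ ofEuclidean n) = eval c '' Sing c := by
  rw [criticalSet_comp_continuousLinearEquiv, Set.image_comp,
    Set.image_preimage_eq _ (ofEuclidean n).surjective]
  rfl

lemma irregularValues_comp_ofEuclidean (c : MixedCoeff n) :
    irregularValues (eval c ∘ ofEuclidean n) = eval c '' Sing c ∪ Sset c := by
  rw [irregularValues, image_criticalSet_comp_ofEuclidean, asymptoticValues_comp_ofEuclidean]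

end EuclideanCoordinates

end Mixed

section GeneralTheorem

open MilnorFibration
open scoped ContDiff

theorem mixed_fibration_theorem_general {E F : Type*} [NormedAddCommGroup E]
    [InnerProductSpace ℝ E] [FiniteDimensional ℝ E] [NormedAddCommGroup F] [InnerProductSpace ℝ F]
    [FiniteDimensional ℝ F] {f : E → F} {v : F} (hf : ContDiff ℝ ∞ f)
    (hv : v ∉ irregularValues f) :
    ∃ U, IsOpen U ∧ v ∈ U ∧ U ⊆ (irregularValues f)ᶜ ∧
      TriviallyFibredOver f U v := by
  obtain ⟨R, δ, hδ, hregular⟩ := exists_regular_ball (hf.of_le (by simp)) hv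
  let χ : ContDiffBump v := ⟨δ / 3, δ / 2, by positivity, by linarith⟩
  have hχδ : tsupport χ ⊆ Metric.ball v δ :=
    χ.tsupport_eq.trans_subset (Metric.closedBall_subset_ball (half_lt_self hδ))
  obtain ⟨X, hX⟩ := exists_controlledLift hf χ.contDiff
    (fun z hz => (hregular z (hχδ hz)).1) (fun z hz => (hregular z (hχδ hz)).2)
  have hvU : v ∈ Metric.ball v (δ / 3) := Metric.mem_ball_self (by positivity)
  refine ⟨Metric.ball v (δ / 3), Metric.isOpen_ball, hvU, ?_,
    hX.triviallyFibredOver hf χ.contDiff (convex_ball v _)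
      (fun y hy => χ.one_of_mem_closedBall (Metric.ball_subset_closedBall hy)) hvU⟩
  intro y hy
  replace hy : y ∈ Metric.ball v δ := Metric.ball_subset_ball (by linarith) hy
  rintro (⟨z, hz, rfl⟩ | ⟨z, hz, hnorm, hlim⟩)
  · exact (hregular z hy).1 hz
  · obtain ⟨k, hk, hkδ⟩ := ((hnorm.eventually_ge_atTop R).and
      (hlim.eventually (Metric.isOpen_ball.mem_nhds hy))).exists
    exact (hregular (z k) hkδ).2 hk (hz k)

end GeneralTheorem

/-- Fibration theorem. -/
theorem mixed_fibration_theorem {n : ℕ} (c : MixedCoeff n) (B : Set ℂ)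
    (hB : B = Mixed.eval c '' Mixed.Sing c ∪ Mixed.Sset c) :
    ∀ v : ℂ, v ∉ B → ∃ U : Set ℂ, IsOpen U ∧ v ∈ U ∧ U ⊆ Bᶜ ∧
      ∃ (Φ : (Fin n → ℂ) → ℂ × (Fin n → ℂ)) (Ψ : ℂ × (Fin n → ℂ) → (Fin n → ℂ)),
        (∀ x ∈ Mixed.eval c ⁻¹' U,
          Φ x ∈ U ×ˢ (Mixed.eval c ⁻¹' {v}) ∧ Ψ (Φ x) = x ∧ (Φ x).1 = Mixed.eval c x) ∧
        (∀ p ∈ U ×ˢ (Mixed.eval c ⁻¹' {v}), Ψ p ∈ Mixed.eval c ⁻¹' U ∧ Φ (Ψ p) = p) ∧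
        ContDiffOn ℝ (⊤ : ℕ∞) Φ (Mixed.eval c ⁻¹' U) ∧
        ContDiffOn ℝ (⊤ : ℕ∞) Ψ (U ×ˢ (Mixed.eval c ⁻¹' {v})) := by
  intro v hv
  rw [← Mixed.irregularValues_comp_ofEuclidean] at hB
  subst hB
  obtain ⟨U, hU, hvU, hUB, htrivial⟩ := mixed_fibration_theorem_general
    ((Mixed.contDiff_eval c).comp (Mixed.ofEuclidean n).contDiff) hv
  exact ⟨U, hU, hvU, hUB, htrivial.comp_continuousLinearEquiv (Mixed.ofEuclidean n).symm⟩
end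
end
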